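/- arXiv:1506.08927 — 2 statements merged into one kernel-verified Lean document; each statement's English description precedes it below -/
import Mathlib

section
/- Let n ≥ 1 and ε = (−,…,−). A finite poset P with exactly n elements is isomorphic to the poset P_d of some strand diagram d with n strands on {0,…,n} (i.e. some noncrossing spanning tree on {0,…,n}) if and only if: (i) each element of P covers at most two elements and is covered by at most two elements; (ii) the underlying undirected graph of the Hasse diagram of P has no cycles; and (iii) the underlying undirected graph of the Hasse diagram of P is connected. -/
namespace ESPaper

/-- The chords `c = {c.1, c.2}` and `d = {d.1, d.2}` (with `c.1 < c.2`, `d.1 < d.2`) cross. -/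
def Crosses (ε : ℕ → Bool) (c d : ℕ × ℕ) : Prop :=
  (c.1 < d.1 ∧ d.1 < c.2 ∧ c.2 < d.2 ∧ ε d.1 = ε c.2) ∨
  (d.1 < c.1 ∧ c.1 < d.2 ∧ d.2 < c.2 ∧ ε c.1 = ε d.2) ∨
  (c.1 < d.1 ∧ d.1 < d.2 ∧ d.2 < c.2 ∧ ε d.1 ≠ ε d.2) ∨
  (d.1 < c.1 ∧ c.1 < c.2 ∧ c.2 < d.2 ∧ ε c.1 ≠ ε c.2)

/-- The chords `c` and `d` share an endpoint. -/
def SharesEndpoint (c d : ℕ × ℕ) : Prop :=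
  c.1 = d.1 ∨ c.1 = d.2 ∨ c.2 = d.1 ∨ c.2 = d.2

/-- The chord `c` is clockwise from the chord `d` (chords written with `c.1 < c.2`, `d.1 < d.2`). -/
def Cw (ε : ℕ → Bool) (c d : ℕ × ℕ) : Prop :=
  (c.2 = d.1 ∧ ε c.2 = true) ∨
  (d.2 = c.1 ∧ ε c.1 = false) ∨
  (c.1 = d.1 ∧ ((c.2 < d.2 ∧ ε c.2 = false) ∨ (d.2 < c.2 ∧ ε d.2 = true))) ∨
  (c.2 = d.2 ∧ ((c.1 < d.1 ∧ ε d.1 = false) ∨ (d.1 < c.1 ∧ ε c.1 = true)))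

/-- The graph on `{0,…,n} ⊆ ℕ` determined by a finite set of chords. -/
def chordGraph (d : Finset (ℕ × ℕ)) : SimpleGraph ℕ :=
  SimpleGraph.fromEdgeSet {e : Sym2 ℕ | ∃ c ∈ d, e = s(c.1, c.2)}

/-- The graph on `{0,…,n} ⊆ ℕ` determined by a family of chords. -/
def chordGraphF {k : ℕ} (c : Fin k → ℕ × ℕ) : SimpleGraph ℕ :=
  SimpleGraph.fromEdgeSet {e : Sym2 ℕ | ∃ a : Fin k, e = s((c a).1, (c a).2)}

/-- `d` is a strand diagram on `S_{n,ε}`: valid pairwise-noncrossing chords forming a forest. -/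
def IsDiagram (n : ℕ) (ε : ℕ → Bool) (d : Finset (ℕ × ℕ)) : Prop :=
  (∀ c ∈ d, c.1 < c.2 ∧ c.2 ≤ n) ∧
  (∀ c ∈ d, ∀ c' ∈ d, ¬ Crosses ε c c') ∧
  (chordGraph d).IsAcyclic

/-- The family `c` is a strand diagram (pairwise-noncrossing chords forming a forest). -/
def IsDiagramF {k : ℕ} (ε : ℕ → Bool) (c : Fin k → ℕ × ℕ) : Prop :=
  (∀ a b : Fin k, ¬ Crosses ε (c a) (c b)) ∧ (chordGraphF c).IsAcyclic

/-- The partial order of the poset `P_d`: `x ≤ y` iff there is a chain of chords of `d`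
from `x` to `y` in which each chord shares an endpoint with, and is clockwise from,
the previous one. -/
def leD (ε : ℕ → Bool) (d : Finset (ℕ × ℕ)) : ℕ × ℕ → ℕ × ℕ → Prop :=
  Relation.ReflTransGen (fun x y => x ∈ d ∧ y ∈ d ∧ SharesEndpoint x y ∧ Cw ε y x)

/-!
The chords of a strand diagram are the edges of a forest, and the chords at a fixed endpoint are
linearly ordered by clockwise rotation. Let `y` follow `x` immediately at the endpoint `v`. Deleting
the chords at `v` from `y` onwards cuts off the branches of the forest behind them, and a chain of
clockwise steps can only enter these branches at `v`, that is, from a chord `≤ x` to a chord `≥ y`.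
Hence `x ⋖ y`, and `{x, y}` is a bridge of the Hasse diagram: covers are exactly consecutive chords,
each chord has at most one upper and one lower cover per endpoint, and the Hasse diagram is a
forest, which is connected when the diagram is a spanning tree.

Conversely, remove a leaf `x` of the Hasse diagram of `P` and realize the rest by induction. Up to
duality, which exchanges the two signs, `x` is maximal and covers a single `y`. As `y` has at most
one upper cover left, it is the last chord at one of its endpoints `v`; a short chord joining `v` to
a new marked point next to it crosses nothing, comes after `y` at `v`, and realizes `x`.
-/

lemma injective_and_range_eq_insert {α β : Type*} {x : α} {s : Set β}
    {g : ({x}ᶜ : Set α) → β} (hg : Function.Injective g) (hgs : Set.range g = s) {f : α → β}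
    (hfg : ∀ z : ({x}ᶜ : Set α), f z = g z) (hfx : f x ∉ s) :
    Function.Injective f ∧ Set.range f = insert (f x) s := by
  obtain rfl : Set.domRestrict {x}ᶜ f = g := funext hfg
  rw [Set.range_domRestrict] at hgs
  subst hgs
  refine ⟨?_, (Set.insert_image_compl_eq_range f x).symm⟩
  rw [← Set.injOn_univ, ← Set.union_compl_self {x}, Set.singleton_union,
    Set.injOn_insert (by simp)]
  exact ⟨Set.injOn_iff_injective.2 hg, hfx⟩

section Order

variable {P : Type*} [PartialOrder P] [Finite P]

lemma le_iff_reflTransGen_covBy_of_finite {x y : P} :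
    x ≤ y ↔ Relation.ReflTransGen (· ⋖ ·) x y := by
  classical
  have := Fintype.ofFinite P
  let _ : LocallyFiniteOrder P := Fintype.toLocallyFiniteOrder
  exact le_iff_reflTransGen_covBy

lemma le_iff_reflTransGen_iff {r : P → P → Prop} :
    (∀ x y, x ≤ y ↔ Relation.ReflTransGen r x y) ↔
      (∀ x y, r x y → x ≤ y) ∧ ∀ x y, x ⋖ y → r x y := by
  refine ⟨fun h ↦ ⟨fun x y hxy ↦ (h x y).2 (.single hxy), fun x y hxy ↦ ?_⟩, fun h x y ↦ ?_⟩
  · have hchain := (h x y).1 hxy.le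
    induction hchain using Relation.ReflTransGen.head_induction_on with
    | refl => exact absurd rfl hxy.ne
    | @head x z hxz hzy ih =>
      rcases ((h x z).2 (.single hxz)).eq_or_lt with rfl | hlt
      · exact ih hxy
      · rwa [← ((h z y).2 hzy).eq_of_not_lt (hxy.2 hlt)]
  · refine ⟨fun hxy ↦ ?_, fun hxy ↦ ?_⟩
    · exact Relation.ReflTransGen.mono h.2 _ _ (le_iff_reflTransGen_covBy_of_finite.1 hxy)
    · induction hxy with
      | refl => exact le_rfl
      | tail _ hyz ih => exact ih.trans (h.1 _ _ hyz)

lemma hasse_reachable_of_le {x y : P} (hxy : x ≤ y) : (SimpleGraph.hasse P).Reachable x y := by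
  rw [SimpleGraph.reachable_iff_reflTransGen]
  exact Relation.ReflTransGen.mono (fun _ _ ↦ Or.inl) _ _
    (le_iff_reflTransGen_covBy_of_finite.1 hxy)

lemma isMax_of_forall_adj_covBy {x : P}
    (hx : ∀ y, (SimpleGraph.hasse P).Adj x y → y ⋖ x) : IsMax x := by
  by_contra hmax
  obtain ⟨z, hxz⟩ := not_isMax_iff.1 hmax
  obtain ⟨w, hxw, -⟩ := exists_covBy_le_of_lt hxz
  exact hxw.lt.asymm (hx w (Or.inl hxw)).lt

end Order

lemma fromRel_covBy_eq_hasse (P : Type*) [PartialOrder P] :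
    SimpleGraph.fromRel (fun x y : P ↦ x ⋖ y) = SimpleGraph.hasse P := by
  ext x y
  simp only [SimpleGraph.fromRel_adj, SimpleGraph.hasse_adj, and_iff_right_iff_imp]
  exact fun h ↦ h.elim CovBy.ne CovBy.ne'

lemma ncard_setOf_toDual_covBy {P : Type*} [PartialOrder P] (x : P) :
    {y | OrderDual.toDual x ⋖ y}.ncard = {y | y ⋖ x}.ncard := by
  have himage : {y | OrderDual.toDual x ⋖ y} = OrderDual.toDual '' {y | y ⋖ x} := by
    ext y
    simp [Equiv.image_eq_preimage_symm, ← ofDual_covBy_ofDual_iff]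
  rw [himage, Set.ncard_image_of_injective _ OrderDual.toDual.injective]

lemma ncard_setOf_covBy_toDual {P : Type*} [PartialOrder P] (x : P) :
    {y | y ⋖ OrderDual.toDual x}.ncard = {y | x ⋖ y}.ncard :=
  (ncard_setOf_toDual_covBy (OrderDual.toDual x)).symm

lemma covBy_coe_iff_of_isMax {P : Type*} [PartialOrder P] {x : P} (hx : IsMax x)
    {a b : ({x}ᶜ : Set P)} : (a : P) ⋖ b ↔ a ⋖ b := by
  refine ⟨fun hab ↦ ⟨hab.lt, fun c hac hcb ↦ hab.2 hac hcb⟩, fun hab ↦ ⟨hab.lt, fun c hac hcb ↦ ?_⟩⟩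
  have hcx : c ≠ x := by
    rintro rfl
    exact hx.not_lt hcb
  exact hab.2 (c := ⟨c, hcx⟩) hac hcb

lemma hasse_compl_singleton_of_isMax {P : Type*} [PartialOrder P] {x : P} (hx : IsMax x) :
    SimpleGraph.hasse ({x}ᶜ : Set P) = (SimpleGraph.hasse P).induce {x}ᶜ := by
  ext a b
  simp [covBy_coe_iff_of_isMax hx]

section Graph

variable {V : Type*} {G : SimpleGraph V}

lemma mem_iff_mem_of_reachable {S : Set V} (hS : ∀ ⦃u w⦄, G.Adj u w → (u ∈ S ↔ w ∈ S)) {u w : V}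
    (huw : G.Reachable u w) : u ∈ S ↔ w ∈ S := by
  rw [SimpleGraph.reachable_iff_reflTransGen] at huw
  induction huw with
  | refl => rfl
  | tail _ hadj ih => exact ih.trans (hS hadj)

lemma isAcyclic_map {W : Type*} (φ : V ↪ W) (hG : G.IsAcyclic) : (G.map φ).IsAcyclic := by
  rw [SimpleGraph.isAcyclic_iff_forall_adj_isBridge] at hG ⊢
  intro _ _ hadj
  obtain ⟨u, w, huw, rfl, rfl⟩ := (SimpleGraph.map_adj φ G _ _).1 hadj
  have hbridge := hG huw
  rw [SimpleGraph.isBridge_iff] at hbridge ⊢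
  let S : Set W := φ '' {a | (G.deleteEdges {s(u, w)}).Reachable u a}
  have hS : ∀ ⦃a b⦄, ((G.map φ).deleteEdges {s(φ u, φ w)}).Adj a b → (a ∈ S ↔ b ∈ S) := by
    intro a b hab
    rw [SimpleGraph.deleteEdges_adj, SimpleGraph.map_adj] at hab
    obtain ⟨⟨a, b, hab, rfl, rfl⟩, hne⟩ := hab
    have hab' : (G.deleteEdges {s(u, w)}).Adj a b :=
      SimpleGraph.deleteEdges_adj.2 ⟨hab, fun h ↦ hne (by simpa using congrArg (Sym2.map φ) h)⟩
    simp only [S, φ.injective.mem_set_image]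
    exact ⟨fun h ↦ h.trans hab'.reachable, fun h ↦ h.trans hab'.symm.reachable⟩
  intro hreach
  have hw : φ w ∈ S := (mem_iff_mem_of_reachable hS hreach).1 ⟨u, .rfl, rfl⟩
  exact hbridge (φ.injective.mem_set_image.1 hw)

lemma isTree_of_isAcyclic_of_card_le [Finite V] [Nonempty V] (hG : G.IsAcyclic)
    (hcard : Nat.card V ≤ G.edgeSet.ncard + 1) : G.IsTree := by
  obtain ⟨T, hGT, -, hT⟩ := SimpleGraph.connected_top.exists_isTree_le_of_le_of_isAcyclic
    (le_top : G ≤ ⊤) hG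
  have hTcard : T.edgeSet.ncard + 1 = Nat.card V :=
    (SimpleGraph.isTree_iff_connected_and_card.1 hT).2
  have hedges : G.edgeSet = T.edgeSet :=
    Set.eq_of_subset_of_ncard_le (SimpleGraph.edgeSet_mono hGT) (by lia)
  rwa [SimpleGraph.edgeSet_inj.1 hedges]

lemma ncard_edgeSet_induce_of_support_subset {s : Set V} (hs : G.support ⊆ s) :
    (G.induce s).edgeSet.ncard = G.edgeSet.ncard := by
  have hmap : (G.induce s).map (Function.Embedding.subtype (· ∈ s)) = G :=
    le_antisymm (SimpleGraph.map_comap_le _ _) fun u w huw ↦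
      (SimpleGraph.map_adj _ _ _ _).2
        ⟨⟨u, hs ⟨w, huw⟩⟩, ⟨w, hs ⟨u, huw.symm⟩⟩, huw, rfl, rfl⟩
  conv_rhs => rw [← hmap, SimpleGraph.edgeSet_map]
  exact (Set.ncard_image_of_injective _ (Function.Embedding.injective _)).symm

lemma reachable_of_isAcyclic_of_ncard_le (hG : G.IsAcyclic) {s : Set V} [Finite s]
    (hs : G.support ⊆ s) (hcard : s.ncard ≤ G.edgeSet.ncard + 1) {u w : V} (hu : u ∈ s)
    (hw : w ∈ s) : G.Reachable u w := by
  have : Nonempty s := ⟨⟨u, hu⟩⟩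
  have htree : (G.induce s).IsTree := isTree_of_isAcyclic_of_card_le (hG.induce s) <| by
    rwa [ncard_edgeSet_induce_of_support_subset hs]
  exact (htree.connected.preconnected ⟨u, hu⟩ ⟨w, hw⟩).map (SimpleGraph.Embedding.induce s).toHom

end Graph

section ForestModel

variable {P V : Type*} [PartialOrder P]

/-- An identification `e` of the elements of a poset with the edges of a forest `G` such that the
edges at each vertex form a chain and edges in a covering relation share a vertex. The order of
`P` then determines the linear order of the edges around each vertex, so that no rotation system
has to be recorded. -/
structure IsForestModel (G : SimpleGraph V) (e : P → Sym2 V) : Prop where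
  isAcyclic : G.IsAcyclic
  injective : Function.Injective e
  range_eq : Set.range e = G.edgeSet
  isChain_star : ∀ v, IsChain (· ≤ ·) {a | v ∈ e a}
  exists_mem_of_covBy : ∀ ⦃a b⦄, a ⋖ b → ∃ v, v ∈ e a ∧ v ∈ e b

/-- `y` is the immediate successor of `x` among the edges at the vertex `v`. -/
structure ConsecutiveAt (e : P → Sym2 V) (v : V) (x y : P) : Prop where
  left_mem : v ∈ e x
  right_mem : v ∈ e y
  lt : x < y
  le_of_lt : ∀ ⦃z⦄, v ∈ e z → x < z → y ≤ z

/-- The edges lying in the branches at `v` that start with an edge at `v` above `y`: those with an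
endpoint cut off from `v` by deleting all edges at `v` above `y`. -/
def branchesAbove (G : SimpleGraph V) (e : P → Sym2 V) (v : V) (y : P) : Set P :=
  {b | ∃ u ∈ e b, ¬ (G.deleteEdges (e '' {z | v ∈ e z ∧ y ≤ z})).Reachable v u}

namespace IsForestModel

variable {G : SimpleGraph V} {e : P → Sym2 V}

lemma dual (h : IsForestModel G e) : IsForestModel G (e ∘ OrderDual.ofDual) where
  isAcyclic := h.isAcyclic
  injective := h.injective.comp OrderDual.ofDual.injective
  range_eq := (OrderDual.ofDual.surjective.range_comp e).trans h.range_eq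
  isChain_star v := (h.isChain_star v).symm
  exists_mem_of_covBy _ _ hab :=
    let ⟨v, hb, ha⟩ := h.exists_mem_of_covBy hab.ofDual
    ⟨v, ha, hb⟩

lemma le_or_le (h : IsForestModel G e) {a b : P} {v : V} (ha : v ∈ e a) (hb : v ∈ e b) :
    a ≤ b ∨ b ≤ a :=
  (h.isChain_star v).total ha hb

lemma mem_edgeSet (h : IsForestModel G e) (a : P) : e a ∈ G.edgeSet :=
  h.range_eq ▸ Set.mem_range_self a

lemma adj_of_mem (h : IsForestModel G e) {a : P} {u w : V} (hu : u ∈ e a) (hw : w ∈ e a)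
    (huw : u ≠ w) : G.Adj u w := by
  rw [← SimpleGraph.mem_edgeSet, ← (Sym2.mem_and_mem_iff huw).1 ⟨hu, hw⟩]
  exact h.mem_edgeSet a

lemma reachable_deleteEdges (h : IsForestModel G e) {A : Set P} {a : P} (ha : a ∉ A) {u w : V}
    (hu : u ∈ e a) (hw : w ∈ e a) : (G.deleteEdges (e '' A)).Reachable u w := by
  obtain rfl | huw := eq_or_ne u w
  · rfl
  · refine (SimpleGraph.deleteEdges_adj.2 ⟨h.adj_of_mem hu hw huw, ?_⟩).reachable
    rwa [← (Sym2.mem_and_mem_iff huw).1 ⟨hu, hw⟩, h.injective.mem_set_image]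

lemma not_reachable_deleteEdges (h : IsForestModel G e) {A : Set P} {a : P} (ha : a ∈ A) {u w : V}
    (hu : u ∈ e a) (hw : w ∈ e a) (huw : u ≠ w) : ¬ (G.deleteEdges (e '' A)).Reachable u w := by
  have hbridge := SimpleGraph.isAcyclic_iff_forall_adj_isBridge.1 h.isAcyclic
    (h.adj_of_mem hu hw huw)
  rw [SimpleGraph.isBridge_iff] at hbridge
  refine fun hreach ↦ hbridge (hreach.mono (SimpleGraph.deleteEdges_anti ?_))
  rw [Set.singleton_subset_iff, ← (Sym2.mem_and_mem_iff huw).1 ⟨hu, hw⟩]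
  exact Set.mem_image_of_mem e ha

lemma mem_branchesAbove_iff_le (h : IsForestModel G e) {v : V} {y a : P} (ha : v ∈ e a) :
    a ∈ branchesAbove G e v y ↔ y ≤ a := by
  refine ⟨fun ⟨u, hu, hcut⟩ ↦ ?_, fun hya ↦ ?_⟩
  · by_contra hya
    exact hcut (h.reachable_deleteEdges (fun h ↦ hya h.2) ha hu)
  · obtain ⟨u, hau⟩ := Sym2.mem_iff_exists.1 ha
    have hu : u ∈ e a := hau ▸ Sym2.mem_mk_right v u
    have hvu : v ≠ u := (SimpleGraph.mem_edgeSet G).1 (hau ▸ h.mem_edgeSet a) |>.ne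
    exact ⟨u, hu,
      h.not_reachable_deleteEdges (A := {z | v ∈ e z ∧ y ≤ z}) ⟨ha, hya⟩ ha hu hvu⟩

lemma mem_branchesAbove_of_mem_of_mem (h : IsForestModel G e) {v w : V} {y a b : P}
    (hvw : v ≠ w) (ha : w ∈ e a) (hb : w ∈ e b) (haB : a ∈ branchesAbove G e v y) :
    b ∈ branchesAbove G e v y := by
  obtain ⟨u, hu, hcut⟩ := haB
  refine ⟨w, hb, fun hreach ↦ ?_⟩
  by_cases haA : a ∈ {z | v ∈ e z ∧ y ≤ z}
  · exact h.not_reachable_deleteEdges haA haA.1 ha hvw hreach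
  · exact hcut (hreach.trans (h.reachable_deleteEdges haA ha hu))

lemma mem_branchesAbove_of_covBy (h : IsForestModel G e) {v : V} {y a b : P} (hab : a ⋖ b)
    (ha : a ∈ branchesAbove G e v y) : b ∈ branchesAbove G e v y := by
  obtain ⟨w, hwa, hwb⟩ := h.exists_mem_of_covBy hab
  obtain rfl | hvw := eq_or_ne v w
  · rw [h.mem_branchesAbove_iff_le hwa] at ha
    exact (h.mem_branchesAbove_iff_le hwb).2 (ha.trans hab.le)
  · exact h.mem_branchesAbove_of_mem_of_mem hvw hwa hwb ha

lemma le_and_le_of_covBy (h : IsForestModel G e) {v : V} {x y a b : P}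
    (hxy : ConsecutiveAt e v x y) (hab : a ⋖ b) (ha : a ∉ branchesAbove G e v y)
    (hb : b ∈ branchesAbove G e v y) : a ≤ x ∧ y ≤ b := by
  obtain ⟨w, hwa, hwb⟩ := h.exists_mem_of_covBy hab
  obtain rfl | hvw := eq_or_ne v w
  · rw [h.mem_branchesAbove_iff_le hwa] at ha
    rw [h.mem_branchesAbove_iff_le hwb] at hb
    refine ⟨(h.le_or_le hwa hxy.left_mem).elim id fun hxa ↦ ?_, hb⟩
    exact (hxa.eq_of_not_lt fun hlt ↦ ha (hxy.le_of_lt hwa hlt)).ge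
  · exact absurd (h.mem_branchesAbove_of_mem_of_mem hvw hwb hwa hb) ha

lemma consecutiveAt_of_covBy (h : IsForestModel G e) {x y : P} (hxy : x ⋖ y) :
    ∃ v, ConsecutiveAt e v x y := by
  obtain ⟨v, hx, hy⟩ := h.exists_mem_of_covBy hxy
  refine ⟨v, hx, hy, hxy.lt, fun z hz hxz ↦ ?_⟩
  obtain hyz | hzy := h.le_or_le hy hz
  · exact hyz
  · exact (hzy.eq_of_not_lt (hxy.2 hxz)).ge

lemma covBy_of_consecutiveAt [Finite P] (h : IsForestModel G e) {v : V} {x y : P}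
    (hxy : ConsecutiveAt e v x y) : x ⋖ y := by
  have hcross : ∀ ⦃a b⦄, a ≤ b → a ∉ branchesAbove G e v y → b ∈ branchesAbove G e v y →
      a ≤ x ∧ y ≤ b := by
    intro a b hab ha
    rw [le_iff_reflTransGen_covBy_of_finite] at hab
    induction hab with
    | refl => exact fun hb ↦ absurd hb ha
    | @tail c b hac hcb ih =>
      intro hb
      by_cases hc : c ∈ branchesAbove G e v y
      · exact ⟨(ih hc).1, (ih hc).2.trans hcb.le⟩
      · have hle := h.le_and_le_of_covBy hxy hcb hc hb
        exact ⟨(le_iff_reflTransGen_covBy_of_finite.2 hac).trans hle.1, hle.2⟩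
  have hx : x ∉ branchesAbove G e v y :=
    fun hx ↦ hxy.lt.not_ge ((h.mem_branchesAbove_iff_le hxy.left_mem).1 hx)
  have hy : y ∈ branchesAbove G e v y := (h.mem_branchesAbove_iff_le hxy.right_mem).2 le_rfl
  refine ⟨hxy.lt, fun z hxz hzy ↦ ?_⟩
  by_cases hz : z ∈ branchesAbove G e v y
  · exact hzy.not_ge (hcross hxz.le hx hz).2
  · exact hxz.not_ge (hcross hzy.le hz hy).1

lemma isAcyclic_hasse (h : IsForestModel G e) : (SimpleGraph.hasse P).IsAcyclic := by
  suffices hcut : ∀ ⦃x y : P⦄, x ⋖ y →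
      ¬ ((SimpleGraph.hasse P).deleteEdges {s(x, y)}).Reachable x y by
    simp only [SimpleGraph.isAcyclic_iff_forall_adj_isBridge, SimpleGraph.isBridge_iff]
    rintro x y (hxy | hyx)
    · exact hcut hxy
    · rw [Sym2.eq_swap]
      exact fun hreach ↦ hcut hyx hreach.symm
  intro x y hxy hreach
  obtain ⟨v, hcons⟩ := h.consecutiveAt_of_covBy hxy
  have hstep : ∀ ⦃a b⦄, a ⋖ b → s(a, b) ≠ s(x, y) →
      (a ∈ branchesAbove G e v y ↔ b ∈ branchesAbove G e v y) := by
    refine fun a b hab hne ↦ ⟨h.mem_branchesAbove_of_covBy hab, fun hb ↦ ?_⟩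
    by_contra ha
    obtain ⟨hax, hyb⟩ := h.le_and_le_of_covBy hcons hab ha hb
    have hax' : a = x := hax.eq_of_not_lt fun hlt ↦ hab.2 hlt (hxy.lt.trans_le hyb)
    have hyb' : y = b := hyb.eq_of_not_lt (hab.2 (hax.trans_lt hxy.lt))
    exact hne (by rw [hax', hyb'])
  have hiff : x ∈ branchesAbove G e v y ↔ y ∈ branchesAbove G e v y := by
    refine mem_iff_mem_of_reachable (fun a b hab ↦ ?_) hreach
    obtain ⟨hab | hba, hne⟩ := SimpleGraph.deleteEdges_adj.1 hab
    · exact hstep hab hne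
    · exact (hstep hba (by rwa [Sym2.eq_swap])).symm
  rw [h.mem_branchesAbove_iff_le hcons.left_mem, h.mem_branchesAbove_iff_le hcons.right_mem] at hiff
  exact hxy.lt.not_ge (hiff.2 le_rfl)

lemma subsingleton_setOf_covBy_and_mem (h : IsForestModel G e) (x : P) (v : V) :
    {y | x ⋖ y ∧ v ∈ e y}.Subsingleton := by
  rintro y ⟨hxy, hy⟩ z ⟨hxz, hz⟩
  obtain hyz | hzy := h.le_or_le hy hz
  · exact hyz.eq_of_not_lt (hxz.2 hxy.lt)
  · exact (hzy.eq_of_not_lt (hxy.2 hxz.lt)).symm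

lemma ncard_setOf_covBy_le_two (h : IsForestModel G e) (x : P) : {y | x ⋖ y}.ncard ≤ 2 := by
  obtain ⟨u, w, hx⟩ : ∃ u w, e x = s(u, w) := (e x).ind fun u w ↦ ⟨u, w, rfl⟩
  have hu := h.subsingleton_setOf_covBy_and_mem x u
  have hw := h.subsingleton_setOf_covBy_and_mem x w
  have hsub : {y | x ⋖ y} ⊆ {y | x ⋖ y ∧ u ∈ e y} ∪ {y | x ⋖ y ∧ w ∈ e y} := by
    intro y hxy
    obtain ⟨v, hvx, hvy⟩ := h.exists_mem_of_covBy hxy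
    obtain rfl | rfl := Sym2.mem_iff.1 (hx ▸ hvx)
    · exact Or.inl ⟨hxy, hvy⟩
    · exact Or.inr ⟨hxy, hvy⟩
  calc {y | x ⋖ y}.ncard ≤ _ := Set.ncard_le_ncard hsub (hu.finite.union hw.finite)
    _ ≤ _ := Set.ncard_union_le _ _
    _ ≤ 1 + 1 := add_le_add ((Set.ncard_le_one hu.finite).2 fun _ ha _ hb ↦ hu ha hb)
      ((Set.ncard_le_one hw.finite).2 fun _ ha _ hb ↦ hw ha hb)

lemma hasse_reachable_of_reachable [Finite P] (h : IsForestModel G e) {a b : P} {u w : V}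
    (hu : u ∈ e a) (hw : w ∈ e b) (huw : G.Reachable u w) :
    (SimpleGraph.hasse P).Reachable a b := by
  have hstar : ∀ ⦃a b v⦄, v ∈ e a → v ∈ e b → (SimpleGraph.hasse P).Reachable a b := by
    intro a b v ha hb
    obtain hab | hba := h.le_or_le ha hb
    · exact hasse_reachable_of_le hab
    · exact (hasse_reachable_of_le hba).symm
  rw [SimpleGraph.reachable_iff_reflTransGen] at huw
  induction huw generalizing b with
  | refl => exact hstar hu hw
  | @tail v w _ hadj ih =>
    obtain ⟨c, hc⟩ : s(v, w) ∈ Set.range e := h.range_eq ▸ hadj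
    exact (ih (hc ▸ Sym2.mem_mk_left v w)).trans (hstar (hc ▸ Sym2.mem_mk_right v w) hw)

lemma exists_covBy_of_lt_of_mem [Finite P] (h : IsForestModel G e) {a y : P} {v : V} (hy : v ∈ e y)
    (ha : v ∈ e a) (hya : y < a) : ∃ c, v ∈ e c ∧ y ⋖ c := by
  obtain ⟨c, hc⟩ := (Set.toFinite {c | v ∈ e c ∧ y < c}).exists_minimal ⟨a, ha, hya⟩
  refine ⟨c, hc.prop.1, h.covBy_of_consecutiveAt ⟨hy, hc.prop.1, hc.prop.2, fun z hz hyz ↦ ?_⟩⟩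
  exact (h.le_or_le hc.prop.1 hz).elim id fun hzc ↦ hc.le_of_le ⟨hz, hyz⟩ hzc

lemma exists_mem_forall_le [Finite P] (h : IsForestModel G e) {y : P}
    (hy : {z | y ⋖ z}.Subsingleton) : ∃ v ∈ e y, ∀ a, v ∈ e a → a ≤ y := by
  by_contra! hnot
  have hcov : ∀ v ∈ e y, ∃ c, v ∈ e c ∧ y ⋖ c := by
    intro v hv
    obtain ⟨a, ha, hay⟩ := hnot v hv
    have hya : y < a := ((h.le_or_le hv ha).resolve_right hay).lt_of_not_ge hay
    exact h.exists_covBy_of_lt_of_mem hv ha hya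
  obtain ⟨u, w, hyuw⟩ : ∃ u w, e y = s(u, w) := (e y).ind fun u w ↦ ⟨u, w, rfl⟩
  have huw : u ≠ w := ((SimpleGraph.mem_edgeSet G).1 (hyuw ▸ h.mem_edgeSet y)).ne
  obtain ⟨c, hc, hyc⟩ := hcov u (hyuw ▸ Sym2.mem_mk_left u w)
  obtain ⟨c', hc', hyc'⟩ := hcov w (hyuw ▸ Sym2.mem_mk_right u w)
  obtain rfl : c = c' := hy hyc hyc'
  exact hyc.ne (h.injective (hyuw.trans ((Sym2.mem_and_mem_iff huw).1 ⟨hc, hc'⟩).symm))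

end IsForestModel

end ForestModel

section Chord

variable {ε : ℕ → Bool} {c c' : ℕ × ℕ} {d : Finset (ℕ × ℕ)} {n : ℕ}

/-- The unordered pair of endpoints of a chord. -/
def chordEdge (c : ℕ × ℕ) : Sym2 ℕ := s(c.1, c.2)

/-- The relation generating `leD`: the chords `c` and `c'` share an endpoint and `c'` is clockwise
from `c`. -/
def CwStep (ε : ℕ → Bool) (c c' : ℕ × ℕ) : Prop := SharesEndpoint c c' ∧ Cw ε c' c

lemma chordEdge_injOn : Set.InjOn chordEdge {c | c.1 < c.2} := by
  rintro ⟨i, j⟩ hij ⟨k, l⟩ hkl h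
  simp only [chordEdge, Sym2.eq_iff, Set.mem_ofPred_eq, Prod.mk.injEq] at *
  lia

lemma sharesEndpoint_iff_exists_mem :
    SharesEndpoint c c' ↔ ∃ v, v ∈ chordEdge c ∧ v ∈ chordEdge c' := by
  simp [SharesEndpoint, chordEdge, or_assoc]

lemma cwStep_or_cwStep {v : ℕ} (hc : c.1 < c.2) (hc' : c'.1 < c'.2) (hne : c ≠ c')
    (hv : v ∈ chordEdge c) (hv' : v ∈ chordEdge c') : CwStep ε c c' ∨ CwStep ε c' c := by
  have hshare : SharesEndpoint c c' := sharesEndpoint_iff_exists_mem.2 ⟨v, hv, hv'⟩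
  have hshare' : SharesEndpoint c' c := sharesEndpoint_iff_exists_mem.2 ⟨v, hv', hv⟩
  suffices h : Cw ε c' c ∨ Cw ε c c' from h.imp (⟨hshare, ·⟩) (⟨hshare', ·⟩)
  simp only [chordEdge, Sym2.mem_iff] at hv hv'
  simp only [Cw, Ne, Prod.ext_iff] at *
  grind

lemma cwStep_not : CwStep (fun u ↦ !ε u) c c' ↔ CwStep ε c' c := by
  simp only [CwStep, SharesEndpoint, Cw, Bool.not_eq_true', Bool.not_eq_false']
  grind

lemma crosses_not : Crosses (fun u ↦ !ε u) c c' ↔ Crosses ε c c' := by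
  simp [Crosses]

lemma isDiagram_not : IsDiagram n (fun u ↦ !ε u) d ↔ IsDiagram n ε d := by
  simp only [IsDiagram, crosses_not]

lemma edgeSet_chordGraph (hd : ∀ c ∈ d, c.1 < c.2) : (chordGraph d).edgeSet = chordEdge '' d := by
  have himage : {e : Sym2 ℕ | ∃ c ∈ d, e = s(c.1, c.2)} = chordEdge '' d := by
    ext e
    simp [chordEdge, eq_comm]
  rw [chordGraph, himage, SimpleGraph.edgeSet_fromEdgeSet, sdiff_eq_left, Set.disjoint_left]
  rintro _ ⟨c, hc, rfl⟩
  simpa [chordEdge] using (hd c hc).ne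

lemma IsDiagram.reachable (hd : IsDiagram n ε d) (hcard : n ≤ d.card) {u w : ℕ} (hu : u ≤ n)
    (hw : w ≤ n) : (chordGraph d).Reachable u w := by
  have hedge := edgeSet_chordGraph fun c hc ↦ (hd.1 c hc).1
  have hedges : (chordGraph d).edgeSet.ncard = d.card := by
    rw [hedge, (chordEdge_injOn.mono fun c hc ↦ (hd.1 c hc).1).ncard_image,
      Set.ncard_coe_finset]
  refine reachable_of_isAcyclic_of_ncard_le hd.2.2 (s := Set.Iic n) ?_ ?_ hu hw
  · rintro a ⟨b, hab⟩
    obtain ⟨c, hc, hcab⟩ : s(a, b) ∈ chordEdge '' d := hedge ▸ hab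
    have hac : a ∈ chordEdge c := hcab ▸ Sym2.mem_mk_left a b
    obtain ⟨hlt, hle⟩ := hd.1 c hc
    obtain rfl | rfl := Sym2.mem_iff.1 hac
    · exact hlt.le.trans hle
    · exact hle
  · simpa [hedges] using hcard

end Chord

section Realization

variable {P : Type*} [PartialOrder P] {n : ℕ} {ε : ℕ → Bool} {d : Finset (ℕ × ℕ)}

/-- A labelling `f` of a poset by the chords of a strand diagram `d` on `{0,…,n}` that identifies
the poset with `P_d`. The comparison of the two orders is split into the two halves that are
checked one clockwise step, respectively one covering relation, at a time. -/
structure IsRealization (n : ℕ) (ε : ℕ → Bool) (d : Finset (ℕ × ℕ)) (f : P → ℕ × ℕ) : Prop where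
  isDiagram : IsDiagram n ε d
  injective : Function.Injective f
  range_eq : Set.range f = d
  le_of_cwStep : ∀ ⦃x y⦄, CwStep ε (f x) (f y) → x ≤ y
  cwStep_of_covBy : ∀ ⦃x y⦄, x ⋖ y → CwStep ε (f x) (f y)

lemma leD_apply_iff {ι : Type*} {f : ι → ℕ × ℕ} (hf : Function.Injective f)
    (hrange : Set.range f = d) {x y : ι} :
    leD ε d (f x) (f y) ↔ Relation.ReflTransGen (fun a b ↦ CwStep ε (f a) (f b)) x y := by
  have hmem (a : ι) : f a ∈ d := by
    rw [← Finset.mem_coe, ← hrange]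
    exact Set.mem_range_self a
  constructor
  · suffices hlift : ∀ c', leD ε d (f x) c' → ∀ y, f y = c' →
        Relation.ReflTransGen (fun a b ↦ CwStep ε (f a) (f b)) x y from
      fun h ↦ hlift _ h y rfl
    intro c' h
    induction h with
    | refl => exact fun y hy ↦ hf hy ▸ .refl
    | tail _ hstep ih =>
      rintro y rfl
      obtain ⟨hmid, -, hcw⟩ := hstep
      rw [← Finset.mem_coe, ← hrange] at hmid
      obtain ⟨z, rfl⟩ := hmid
      exact (ih z rfl).tail hcw
  · exact Relation.ReflTransGen.lift f (fun a b hab ↦ ⟨hmem a, hmem b, hab⟩) _ _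

lemma exists_isRealization_iff [Finite P] :
    (∃ f : P → ℕ × ℕ, IsRealization n ε d f) ↔ IsDiagram n ε d ∧
      ∃ e : P ≃ {c : ℕ × ℕ // c ∈ d}, ∀ x y : P, x ≤ y ↔ leD ε d (e x).1 (e y).1 := by
  constructor
  · rintro ⟨f, hf⟩
    refine ⟨hf.isDiagram,
      (Equiv.ofInjective f hf.injective).trans (Equiv.setCongr hf.range_eq), fun x y ↦ ?_⟩
    exact (le_iff_reflTransGen_iff.2 ⟨hf.le_of_cwStep, hf.cwStep_of_covBy⟩ x y).trans
      (leD_apply_iff hf.injective hf.range_eq).symm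
  · rintro ⟨hd, e, he⟩
    have hinj : Function.Injective fun x ↦ (e x).1 := Subtype.val_injective.comp e.injective
    have hrange : (Set.range fun x ↦ (e x).1) = d :=
      (e.surjective.range_comp Subtype.val).trans Subtype.range_coe
    obtain ⟨hle, hcov⟩ := le_iff_reflTransGen_iff.1 fun x y ↦
      (he x y).trans (leD_apply_iff hinj hrange)
    exact ⟨_, hd, hinj, hrange, hle, hcov⟩

namespace IsRealization

variable {f : P → ℕ × ℕ}

lemma mem (h : IsRealization n ε d f) (x : P) : f x ∈ d := by
  rw [← Finset.mem_coe, ← h.range_eq]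
  exact Set.mem_range_self x

lemma card_eq (h : IsRealization n ε d f) : d.card = Nat.card P := by
  rw [← Set.ncard_coe_finset, ← h.range_eq, ← Set.image_univ,
    Set.ncard_image_of_injective _ h.injective, Set.ncard_univ]

lemma fst_lt_snd (h : IsRealization n ε d f) (x : P) : (f x).1 < (f x).2 :=
  (h.isDiagram.1 _ (h.mem x)).1

lemma isForestModel (h : IsRealization n ε d f) :
    IsForestModel (chordGraph d) (chordEdge ∘ f) where
  isAcyclic := h.isDiagram.2.2
  injective x y hxy := h.injective (chordEdge_injOn (h.fst_lt_snd x) (h.fst_lt_snd y) hxy)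
  range_eq := by
    rw [Set.range_comp, h.range_eq, edgeSet_chordGraph fun c hc ↦ (h.isDiagram.1 c hc).1]
  isChain_star _ x hx y hy hxy :=
    (cwStep_or_cwStep (h.fst_lt_snd x) (h.fst_lt_snd y) (h.injective.ne hxy) hx hy).imp
      (h.le_of_cwStep ·) (h.le_of_cwStep ·)
  exists_mem_of_covBy _ _ hxy := sharesEndpoint_iff_exists_mem.1 (h.cwStep_of_covBy hxy).1

lemma of_dual {f : Pᵒᵈ → ℕ × ℕ} (h : IsRealization n (fun u ↦ !ε u) d f) :
    IsRealization n ε d (f ∘ OrderDual.toDual) where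
  isDiagram := isDiagram_not.1 h.isDiagram
  injective := h.injective.comp OrderDual.toDual.injective
  range_eq := (OrderDual.toDual.surjective.range_comp f).trans h.range_eq
  le_of_cwStep _ _ hxy := h.le_of_cwStep (cwStep_not.2 hxy)
  cwStep_of_covBy _ _ hxy := cwStep_not.1 (h.cwStep_of_covBy hxy.toDual)

end IsRealization

end Realization

section BinaryTreeOrder

variable {P : Type*} [PartialOrder P]

/-- Posets whose Hasse diagram is a tree in which every element has at most two lower and at most
two upper covers. -/
structure IsBinaryTreeOrder (P : Type*) [PartialOrder P] : Prop where
  ncard_lowerCovers_le_two : ∀ x : P, {y | y ⋖ x}.ncard ≤ 2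
  ncard_upperCovers_le_two : ∀ x : P, {y | x ⋖ y}.ncard ≤ 2
  isTree_hasse : (SimpleGraph.hasse P).IsTree

lemma IsRealization.isBinaryTreeOrder [Finite P] [Nonempty P] {ε : ℕ → Bool}
    {d : Finset (ℕ × ℕ)} {f : P → ℕ × ℕ} (h : IsRealization (Nat.card P) ε d f) :
    IsBinaryTreeOrder P where
  ncard_lowerCovers_le_two x := by
    rw [← ncard_setOf_toDual_covBy]
    exact h.isForestModel.dual.ncard_setOf_covBy_le_two _
  ncard_upperCovers_le_two := h.isForestModel.ncard_setOf_covBy_le_two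
  isTree_hasse := by
    refine ⟨⟨fun x y ↦ ?_⟩, h.isForestModel.isAcyclic_hasse⟩
    have hle (z : P) : (f z).2 ≤ Nat.card P := (h.isDiagram.1 _ (h.mem z)).2
    exact h.isForestModel.hasse_reachable_of_reachable (Sym2.mem_mk_right _ _)
      (Sym2.mem_mk_right _ _) (h.isDiagram.reachable h.card_eq.ge (hle x) (hle y))

namespace IsBinaryTreeOrder

lemma dual (h : IsBinaryTreeOrder P) : IsBinaryTreeOrder Pᵒᵈ where
  ncard_lowerCovers_le_two x :=
    (ncard_setOf_covBy_toDual (OrderDual.ofDual x)).trans_le (h.ncard_upperCovers_le_two _)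
  ncard_upperCovers_le_two x :=
    (ncard_setOf_toDual_covBy (OrderDual.ofDual x)).trans_le (h.ncard_lowerCovers_le_two _)
  isTree_hasse := SimpleGraph.hasseDualIso.isTree_iff.2 h.isTree_hasse

lemma compl_singleton [Finite P] (h : IsBinaryTreeOrder P) {x : P} (hx : IsMax x)
    (hleaf : ∃! y, (SimpleGraph.hasse P).Adj x y) : IsBinaryTreeOrder ({x}ᶜ : Set P) where
  ncard_lowerCovers_le_two y := by
    refine le_trans ?_ (h.ncard_lowerCovers_le_two y)
    refine Set.ncard_le_ncard_of_injOn Subtype.val (fun z hz ↦ ?_) Subtype.val_injective.injOn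
    exact (covBy_coe_iff_of_isMax hx).2 hz
  ncard_upperCovers_le_two y := by
    refine le_trans ?_ (h.ncard_upperCovers_le_two y)
    refine Set.ncard_le_ncard_of_injOn Subtype.val (fun z hz ↦ ?_) Subtype.val_injective.injOn
    exact (covBy_coe_iff_of_isMax hx).2 hz
  isTree_hasse := by
    classical
    have := Fintype.ofFinite P
    rw [hasse_compl_singleton_of_isMax hx]
    exact ⟨h.isTree_hasse.connected.induce_compl_singleton_of_degree_eq_one
      (SimpleGraph.degree_eq_one_iff_existsUnique_adj.2 hleaf), h.isTree_hasse.isAcyclic.induce _⟩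

lemma subsingleton_upperCovers_compl_singleton [Finite P]
    (h : IsBinaryTreeOrder P) {x : P} {y : ({x}ᶜ : Set P)} (hx : IsMax x) (hyx : ↑y ⋖ x) :
    {z | y ⋖ z}.Subsingleton := by
  intro z hz w hw
  by_contra hzw
  have hsub : {x, (z : P), (w : P)} ⊆ {u | ↑y ⋖ u} := by
    rintro u (rfl | rfl | rfl)
    · exact hyx
    · exact (covBy_coe_iff_of_isMax hx).2 hz
    · exact (covBy_coe_iff_of_isMax hx).2 hw
  have hthree : ({x, (z : P), (w : P)} : Set P).ncard = 3 :=
    Set.ncard_eq_three.2 ⟨x, z, w, Ne.symm z.2, Ne.symm w.2, Subtype.coe_ne_coe.2 hzw, rfl⟩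
  have := h.ncard_upperCovers_le_two y
  have := Set.ncard_le_ncard hsub
  lia

lemma exists_leaf [Finite P] [Nontrivial P] (h : IsBinaryTreeOrder P) :
    ∃ x : P, ∃! y, (SimpleGraph.hasse P).Adj x y := by
  classical
  have := Fintype.ofFinite P
  obtain ⟨x, hx⟩ := h.isTree_hasse.exists_vert_degree_one_of_nontrivial
  exact ⟨x, SimpleGraph.degree_eq_one_iff_existsUnique_adj.1 hx⟩

end IsBinaryTreeOrder

end BinaryTreeOrder

section Insertion

variable {ε : ℕ → Bool} {c : ℕ × ℕ} {d : Finset (ℕ × ℕ)} {n v : ℕ}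

lemma chordGraph_adj {u w : ℕ} :
    (chordGraph d).Adj u w ↔ (∃ c ∈ d, chordEdge c = s(u, w)) ∧ u ≠ w := by
  simp [chordGraph, chordEdge, eq_comm]

lemma chordGraph_insert (c : ℕ × ℕ) (d : Finset (ℕ × ℕ)) :
    chordGraph (insert c d) = chordGraph d ⊔ SimpleGraph.edge c.1 c.2 := by
  ext u w
  simp only [chordGraph_adj, Finset.exists_mem_insert, chordEdge, SimpleGraph.sup_adj,
    SimpleGraph.edge, SimpleGraph.fromEdgeSet_adj, Set.mem_singleton_iff, eq_comm (a := s(u, w))]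
  rw [or_comm, or_and_right]

lemma isAcyclic_chordGraph_insert (hd : (chordGraph d).IsAcyclic) {w : ℕ} (hw : w ∈ chordEdge c)
    (hwd : ∀ c' ∈ d, w ∉ chordEdge c') : (chordGraph (insert c d)).IsAcyclic := by
  have hisolated : (chordGraph d).neighborSet w = ∅ := by
    refine Set.eq_empty_of_forall_notMem fun u hu ↦ ?_
    obtain ⟨⟨c', hc', hwu⟩, -⟩ := chordGraph_adj.1 hu
    exact hwd c' hc' (hwu ▸ Sym2.mem_mk_left w u)
  rw [chordGraph_insert, SimpleGraph.isAcyclic_sup_fromEdgeSet_iff]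
  refine ⟨hd, fun hreach ↦ Or.inl (by_contra fun hne ↦ ?_)⟩
  obtain rfl | rfl := Sym2.mem_iff.1 hw
  · exact SimpleGraph.not_reachable_of_neighborSet_left_eq_empty hne hisolated hreach
  · exact SimpleGraph.not_reachable_of_neighborSet_right_eq_empty hne hisolated hreach

lemma IsDiagram.insert_succ (hd : IsDiagram n ε d) (hv : v + 1 ≤ n) (hε : ε v = ε (v + 1)) {w : ℕ}
    (hw : w ∈ chordEdge (v, v + 1)) (hwd : ∀ c ∈ d, w ∉ chordEdge c) :
    IsDiagram n ε (insert (v, v + 1) d) := by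
  refine ⟨?_, ?_, isAcyclic_chordGraph_insert hd.2.2 hw hwd⟩
  · rw [Finset.forall_mem_insert]
    exact ⟨⟨v.lt_succ_self, hv⟩, hd.1⟩
  · have hleft (c : ℕ × ℕ) : ¬ Crosses ε (v, v + 1) c := by
      simp only [Crosses, hε]
      lia
    have hright (c : ℕ × ℕ) : ¬ Crosses ε c (v, v + 1) := by
      simp only [Crosses, hε]
      lia
    simp only [Finset.forall_mem_insert]
    exact ⟨⟨hleft _, fun c _ ↦ hleft c⟩, fun c hc ↦ ⟨hright c, hd.2.1 c hc⟩⟩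

/-- The action on chords of an order embedding of the marked points. -/
def mapChord (φ : ℕ ↪o ℕ) : ℕ × ℕ ↪ ℕ × ℕ := φ.toEmbedding.prodMap φ.toEmbedding

lemma mapChord_apply (φ : ℕ ↪o ℕ) (c : ℕ × ℕ) : mapChord φ c = (φ c.1, φ c.2) := rfl

lemma chordEdge_mapChord (φ : ℕ ↪o ℕ) (c : ℕ × ℕ) :
    chordEdge (mapChord φ c) = (chordEdge c).map φ := rfl

lemma cwStep_mapChord {φ : ℕ ↪o ℕ} {c c' : ℕ × ℕ} :
    CwStep ε (mapChord φ c) (mapChord φ c') ↔ CwStep (ε ∘ φ) c c' := by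
  simp [CwStep, SharesEndpoint, Cw, mapChord_apply]

lemma crosses_mapChord {φ : ℕ ↪o ℕ} {c c' : ℕ × ℕ} :
    Crosses ε (mapChord φ c) (mapChord φ c') ↔ Crosses (ε ∘ φ) c c' := by
  simp [Crosses, mapChord_apply]

lemma chordGraph_map (φ : ℕ ↪o ℕ) (d : Finset (ℕ × ℕ)) :
    chordGraph (d.map (mapChord φ)) = (chordGraph d).map φ.toEmbedding := by
  ext u w
  simp only [SimpleGraph.map_adj, chordGraph_adj, Finset.mem_map, exists_exists_and_eq_and,
    chordEdge_mapChord]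
  constructor
  · rintro ⟨⟨c, hc, huw⟩, hne⟩
    obtain ⟨rfl, rfl⟩ | ⟨rfl, rfl⟩ := Sym2.eq_iff.1 huw
    · exact ⟨c.1, c.2, ⟨⟨c, hc, rfl⟩, fun h ↦ hne (congrArg φ h)⟩, rfl, rfl⟩
    · exact ⟨c.2, c.1, ⟨⟨c, hc, Sym2.eq_swap⟩, fun h ↦ hne (congrArg φ h)⟩, rfl, rfl⟩
  · rintro ⟨a, b, ⟨⟨c, hc, hab⟩, hne⟩, rfl, rfl⟩
    exact ⟨⟨c, hc, by rw [hab, Sym2.map_mk]; rfl⟩, φ.injective.ne hne⟩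

lemma IsDiagram.map {m : ℕ} {φ : ℕ ↪o ℕ} (hd : IsDiagram n (ε ∘ φ) d)
    (hφ : φ n ≤ m) : IsDiagram m ε (d.map (mapChord φ)) := by
  refine ⟨?_, ?_, chordGraph_map φ d ▸ isAcyclic_map φ.toEmbedding hd.2.2⟩
  · rw [Finset.forall_mem_map]
    exact fun c hc ↦ ⟨φ.lt_iff_lt.2 (hd.1 c hc).1, (φ.le_iff_le.2 (hd.1 c hc).2).trans hφ⟩
  · simp only [Finset.forall_mem_map, crosses_mapChord]
    exact hd.2.1

/-- The order embedding of `ℕ` that makes room for a new marked point at `w`. -/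
def skipEmb (w : ℕ) : ℕ ↪o ℕ :=
  OrderEmbedding.ofStrictMono (fun u ↦ if u < w then u else u + 1) fun a b hab ↦ by
    dsimp only
    split_ifs <;> lia

lemma skipEmb_apply (w u : ℕ) : skipEmb w u = if u < w then u else u + 1 := rfl

lemma skipEmb_ne (w u : ℕ) : skipEmb w u ≠ w := by
  rw [skipEmb_apply]
  split_ifs <;> lia

lemma skipEmb_le_succ (w u : ℕ) : skipEmb w u ≤ u + 1 := by
  rw [skipEmb_apply]
  split_ifs <;> lia

lemma notMem_chordEdge_mapChord_skipEmb (w : ℕ) (c : ℕ × ℕ) :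
    w ∉ chordEdge (mapChord (skipEmb w) c) := by
  simp [chordEdge, mapChord_apply, (skipEmb_ne w _).symm]

/-- The position, for the constant sign `b`, of the new leaf of a strand diagram when the chord
`{v, v + 1}` is attached at the old point `v` so as to come after all chords at `v` in clockwise
order: the old point becomes `v` for the sign `-` and `v + 1` for the sign `+`. -/
def newLeaf (b : Bool) (v : ℕ) : ℕ := bif b then v else v + 1

lemma newLeaf_mem_chordEdge (b : Bool) (v : ℕ) : newLeaf b v ∈ chordEdge (v, v + 1) := by
  cases b <;> simp [newLeaf, chordEdge]

lemma cwStep_mapChord_succ_iff {b : Bool} (hc : c.1 < c.2) :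
    CwStep (fun _ ↦ b) (mapChord (skipEmb (newLeaf b v)) c) (v, v + 1) ↔ v ∈ chordEdge c := by
  rw [chordEdge, Sym2.mem_iff]
  cases b <;>
    simp only [CwStep, SharesEndpoint, Cw, mapChord_apply, skipEmb_apply, newLeaf, cond_true,
      cond_false] <;>
    grind

lemma not_cwStep_succ_mapChord {b : Bool} (hc : c.1 < c.2) :
    ¬ CwStep (fun _ ↦ b) (v, v + 1) (mapChord (skipEmb (newLeaf b v)) c) := by
  cases b <;>
    simp only [CwStep, SharesEndpoint, Cw, mapChord_apply, skipEmb_apply, newLeaf, cond_true,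
      cond_false] <;>
    grind

lemma IsDiagram.insert_succ_map_skipEmb {b : Bool} (hd : IsDiagram n (fun _ ↦ b) d) (hv : v ≤ n) :
    IsDiagram (n + 1) (fun _ ↦ b)
      (insert (v, v + 1) (d.map (mapChord (skipEmb (newLeaf b v))))) := by
  have hmap : IsDiagram (n + 1) (fun _ ↦ b) (d.map (mapChord (skipEmb (newLeaf b v)))) :=
    IsDiagram.map hd (skipEmb_le_succ _ n)
  refine hmap.insert_succ (Nat.succ_le_succ hv) rfl (newLeaf_mem_chordEdge b v) ?_
  rw [Finset.forall_mem_map]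
  exact fun c _ ↦ notMem_chordEdge_mapChord_skipEmb _ c

end Insertion

section Existence

variable {P : Type*} [PartialOrder P] {n : ℕ} {b : Bool} {d : Finset (ℕ × ℕ)}

lemma isRealization_singleton [Subsingleton P] [Nonempty P] (ε : ℕ → Bool) :
    IsRealization 1 ε {(0, 1)} fun _ : P ↦ (0, 1) where
  isDiagram := by
    refine ⟨by simp, by simp [Crosses], ?_⟩
    rw [← insert_empty_eq]
    exact isAcyclic_chordGraph_insert (by simp [chordGraph]) (Sym2.mem_mk_left 0 1) (by simp)
  injective := Function.injective_of_subsingleton _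
  range_eq := by simp
  le_of_cwStep x y _ := (Subsingleton.elim x y).le
  cwStep_of_covBy x y hxy := absurd (Subsingleton.elim x y) hxy.ne

lemma IsRealization.of_compl_singleton {x : P} {g : ({x}ᶜ : Set P) → ℕ × ℕ}
    (hg : IsRealization n (fun _ ↦ b) d g) (hx : IsMax x) {y : ({x}ᶜ : Set P)}
    (hcov : ∀ z, z ⋖ x ↔ z = y) {v : ℕ} (hv : v ∈ chordEdge (g y))
    (hle : ∀ z, v ∈ chordEdge (g z) → z ≤ y) {f : P → ℕ × ℕ} (hfx : f x = (v, v + 1))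
    (hfg : ∀ z : ({x}ᶜ : Set P), f z = mapChord (skipEmb (newLeaf b v)) (g z)) :
    IsRealization (n + 1) (fun _ ↦ b)
      (insert (v, v + 1) (d.map (mapChord (skipEmb (newLeaf b v))))) f := by
  have hvn : v ≤ n := by
    have := hg.isDiagram.1 _ (hg.mem y)
    obtain rfl | rfl := Sym2.mem_iff.1 hv <;> lia
  have hrange : Set.range (mapChord (skipEmb (newLeaf b v)) ∘ g) =
      d.map (mapChord (skipEmb (newLeaf b v))) := by
    rw [Set.range_comp, hg.range_eq, Finset.coe_map]
  have hnew : (v, v + 1) ∉ d.map (mapChord (skipEmb (newLeaf b v))) := by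
    intro hmem
    obtain ⟨c, -, hc⟩ := Finset.mem_map.1 hmem
    exact notMem_chordEdge_mapChord_skipEmb _ c (hc ▸ newLeaf_mem_chordEdge b v)
  obtain ⟨hinj, hins⟩ := injective_and_range_eq_insert
    ((mapChord _).injective.comp hg.injective) hrange hfg (hfx ▸ hnew)
  refine ⟨hg.isDiagram.insert_succ_map_skipEmb hvn, hinj, ?_, fun z w hzw ↦ ?_, fun z w hzw ↦ ?_⟩
  · rw [hins, hfx, Finset.coe_insert]
  · by_cases hz : z = x <;> by_cases hw : w = x
    · rw [hz, hw]
    · rw [hz, hfx, hfg ⟨w, hw⟩] at hzw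
      exact absurd hzw (not_cwStep_succ_mapChord (hg.fst_lt_snd _))
    · rw [hw, hfx, hfg ⟨z, hz⟩, cwStep_mapChord_succ_iff (hg.fst_lt_snd _)] at hzw
      have hzy : z ≤ y := hle ⟨z, hz⟩ hzw
      exact hw ▸ hzy.trans ((hcov y).2 rfl).le
    · rw [hfg ⟨z, hz⟩, hfg ⟨w, hw⟩, cwStep_mapChord] at hzw
      exact hg.le_of_cwStep hzw
  · have hz : z ≠ x := fun hzx ↦ hx.not_lt (hzx ▸ hzw.lt)
    by_cases hw : w = x
    · obtain rfl := (hcov z).1 (hw ▸ hzw)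
      rwa [hw, hfx, hfg, cwStep_mapChord_succ_iff (hg.fst_lt_snd _)]
    · rw [hfg ⟨z, hz⟩, hfg ⟨w, hw⟩, cwStep_mapChord]
      exact hg.cwStep_of_covBy ((covBy_coe_iff_of_isMax hx).1 hzw)

lemma IsBinaryTreeOrder.exists_isRealization_of_covBy_leaf [Finite P] (h : IsBinaryTreeOrder P)
    {x y : P} (hyx : y ⋖ x) (hleaf : ∀ z, (SimpleGraph.hasse P).Adj x z → z = y)
    (ih : IsBinaryTreeOrder ({x}ᶜ : Set P) → ∃ (d : Finset (ℕ × ℕ)) (g : ({x}ᶜ : Set P) → ℕ × ℕ),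
      IsRealization (Nat.card ({x}ᶜ : Set P)) (fun _ ↦ b) d g) :
    ∃ (d : Finset (ℕ × ℕ)) (f : P → ℕ × ℕ), IsRealization (Nat.card P) (fun _ ↦ b) d f := by
  classical
  have hx : IsMax x := isMax_of_forall_adj_covBy fun z hz ↦ hleaf z hz ▸ hyx
  have hcov (z : P) : z ⋖ x ↔ z = y := ⟨fun hz ↦ hleaf z (Or.inr hz), fun hz ↦ hz ▸ hyx⟩
  obtain ⟨d, g, hg⟩ := ih (h.compl_singleton hx ⟨y, Or.inr hyx, hleaf⟩)
  lift y to ({x}ᶜ : Set P) using hyx.ne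
  obtain ⟨v, hv, hle⟩ := hg.isForestModel.exists_mem_forall_le
    (h.subsingleton_upperCovers_compl_singleton hx hyx)
  let f (z : P) : ℕ × ℕ :=
    if hz : z = x then (v, v + 1) else mapChord (skipEmb (newLeaf b v)) (g ⟨z, hz⟩)
  have hcard : Nat.card ({x}ᶜ : Set P) + 1 = Nat.card P := by
    rw [Nat.card_coe_set_eq, add_comm, ← Set.ncard_singleton x, Set.ncard_add_ncard_compl]
  rw [← hcard]
  exact ⟨_, f, hg.of_compl_singleton hx hcov hv hle (dif_pos rfl) fun z ↦ dif_neg z.2⟩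

theorem IsBinaryTreeOrder.exists_isRealization {P : Type*} [hP : PartialOrder P] [Finite P]
    (h : IsBinaryTreeOrder P) (b : Bool) :
    ∃ (d : Finset (ℕ × ℕ)) (f : P → ℕ × ℕ), IsRealization (Nat.card P) (fun _ ↦ b) d f := by
  induction P using Finite.induction_subsingleton_or_nontrivial generalizing hP b with
  | hbase P =>
    have : Nonempty P := h.isTree_hasse.connected.nonempty
    rw [Nat.card_of_subsingleton (Classical.arbitrary P)]
    exact ⟨_, _, isRealization_singleton _⟩
  | hstep P ih =>
    have hlt (x : P) : Nat.card ({x}ᶜ : Set P) < Nat.card P := by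
      rw [Nat.card_coe_set_eq]
      exact Set.ncard_lt_card (by simp)
    obtain ⟨x, y, hxy | hyx, hleaf⟩ := h.exists_leaf
    · obtain ⟨d, f, hf⟩ := h.dual.exists_isRealization_of_covBy_leaf (b := !b) hxy.toDual
        (fun z hz ↦ hleaf z (hz.imp CovBy.ofDual CovBy.ofDual).symm)
        fun hQ ↦ ih ({OrderDual.toDual x}ᶜ : Set Pᵒᵈ) (hlt x) hQ _
      exact ⟨d, _, hf.of_dual⟩
    · exact h.exists_isRealization_of_covBy_leaf hyx hleaf fun hQ ↦ ih _ (hlt x) hQ b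

theorem poset_of_diagram_characterization_general (n : ℕ) (hn : 1 ≤ n) (b : Bool)
    (P : Type*) [PartialOrder P] [Finite P] (hcard : Nat.card P = n) :
    (∃ d : Finset (ℕ × ℕ), d.card = n ∧ IsDiagram n (fun _ => b) d ∧
      ∃ e : P ≃ {c : ℕ × ℕ // c ∈ d},
        ∀ x y : P, x ≤ y ↔ leD (fun _ => b) d (e x).1 (e y).1) ↔
    ((∀ x : P, {y : P | y ⋖ x}.ncard ≤ 2 ∧ {y : P | x ⋖ y}.ncard ≤ 2) ∧
      (SimpleGraph.fromRel (fun x y : P => x ⋖ y)).IsAcyclic ∧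
      (SimpleGraph.fromRel (fun x y : P => x ⋖ y)).Connected) := by
  subst hcard
  have : Nonempty P := (Nat.card_pos_iff.1 hn).1
  rw [fromRel_covBy_eq_hasse]
  constructor
  · rintro ⟨d, -, hd⟩
    obtain ⟨f, hf⟩ := exists_isRealization_iff.2 hd
    have h := hf.isBinaryTreeOrder
    exact ⟨fun x ↦ ⟨h.ncard_lowerCovers_le_two x, h.ncard_upperCovers_le_two x⟩,
      h.isTree_hasse.isAcyclic, h.isTree_hasse.connected⟩
  · rintro ⟨hcovers, hacyclic, hconnected⟩
    have h : IsBinaryTreeOrder P :=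
      ⟨fun x ↦ (hcovers x).1, fun x ↦ (hcovers x).2, hconnected, hacyclic⟩
    obtain ⟨d, f, hf⟩ := h.exists_isRealization b
    exact ⟨d, hf.card_eq, exists_isRealization_iff.1 ⟨f, hf⟩⟩

end Existence

/-- Theorem 5.6: for `ε = (−,…,−)`, a finite poset `P` with `n` elements is isomorphic to
the poset `P_d` of a strand diagram with `n` strands (a noncrossing spanning tree on
`{0,…,n}`) iff every element covers and is covered by at most two elements, and the Hasse
diagram of `P` is acyclic and connected. -/
theorem poset_of_diagram_characterization (n : ℕ) (hn : 1 ≤ n)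
    (P : Type) [PartialOrder P] [Fintype P] (hcard : Fintype.card P = n) :
    (∃ d : Finset (ℕ × ℕ), d.card = n ∧ IsDiagram n (fun _ => false) d ∧
      ∃ e : P ≃ {c : ℕ × ℕ // c ∈ d},
        ∀ x y : P, x ≤ y ↔ leD (fun _ => false) d (e x).1 (e y).1) ↔
    ((∀ x : P, {y : P | y ⋖ x}.ncard ≤ 2 ∧ {y : P | x ⋖ y}.ncard ≤ 2) ∧
      (SimpleGraph.fromRel (fun x y : P => x ⋖ y)).IsAcyclic ∧
      (SimpleGraph.fromRel (fun x y : P => x ⋖ y)).Connected) :=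
  poset_of_diagram_characterization_general n hn false P (Nat.card_eq_fintype_card.trans hcard)

end ESPaper
end

section
/- Let d = {{i_1,j_1}, …, {i_n,j_n}} be a strand diagram with n strands on {0,…,n} and let ξ̄ = {X_{i_1,j_1}, …, X_{i_n,j_n}} be the corresponding complete exceptional collection of Q_ε. Then the map sending a complete exceptional sequence (V_1, …, V_n) whose underlying set of representations is ξ̄ to the function f : P_d → {1,…,n} defined by f(chord of V_ℓ) = n+1−ℓ is a bijection from the set of complete exceptional sequences that can be formed from the representations of ξ̄ onto the set of linear extensions of the poset P_d. -/
namespace ESPaper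

/-- Source of arrow `a m` (between vertices `m` and `m+1`): `m` if `ε m = +` (true). -/
def asrc (ε : ℕ → Bool) (m : ℕ) : ℕ := if ε m then m else m + 1

/-- Target of arrow `a m`. -/
def atgt (ε : ℕ → Bool) (m : ℕ) : ℕ := if ε m then m + 1 else m

/-- A representation of the type `A_n` quiver `Q_ε`: finite dimensional vector spaces at the
vertices `1, …, n` (the spaces at the remaining indices are required to be trivial, so that
the maps attached to indices outside `1, …, n-1` carry no information) together with a
linear map along each arrow `a m : asrc ε m → atgt ε m`, `1 ≤ m ≤ n-1`. -/
structure Rep (K : Type) [Field K] (n : ℕ) (ε : ℕ → Bool) : Type 1 where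
  V : ℕ → Type
  [instAdd : ∀ m, AddCommGroup (V m)]
  [instMod : ∀ m, Module K (V m)]
  [instFin : ∀ m, FiniteDimensional K (V m)]
  triv : ∀ m, m = 0 ∨ n < m → Subsingleton (V m)
  φ : ∀ m, V (asrc ε m) →ₗ[K] V (atgt ε m)

attribute [instance] Rep.instAdd Rep.instMod Rep.instFin

/-- A morphism of representations of `Q_ε`. -/
structure RepHom {K : Type} [Field K] {n : ℕ} {ε : ℕ → Bool} (A B : Rep K n ε) where
  app : ∀ m, A.V m →ₗ[K] B.V m
  comm : ∀ m, (app (atgt ε m)).comp (A.φ m) = (B.φ m).comp (app (asrc ε m))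

/-- Vertex space of the indecomposable `X_{i,j}` (for `0 ≤ i < j ≤ n`): `K` at the
vertices `i+1, …, j` and `0` elsewhere. -/
def XV (K : Type) [Field K] (n i j m : ℕ) : Submodule K K :=
  if i + 1 ≤ m ∧ m ≤ j ∧ m ≤ n then ⊤ else ⊥

/-- Arrow map of the indecomposable `X_{i,j}`: the identity whenever both endpoints of the
arrow lie in the support, and zero otherwise. -/
def Xφ (K : Type) [Field K] (n : ℕ) (ε : ℕ → Bool) (i j m : ℕ) :
    XV K n i j (asrc ε m) →ₗ[K] XV K n i j (atgt ε m) :=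
  if h : i + 1 ≤ atgt ε m ∧ atgt ε m ≤ j ∧ atgt ε m ≤ n then
    LinearMap.codRestrict _ (XV K n i j (asrc ε m)).subtype
      (fun x => by simp [XV, h.1, h.2.1, h.2.2])
  else 0

/-- The indecomposable representation `X_{i,j}` of `Q_ε`. -/
def Xrep (K : Type) [Field K] (n : ℕ) (ε : ℕ → Bool) (i j : ℕ) : Rep K n ε where
  V m := XV K n i j m
  instAdd _ := inferInstance
  instMod _ := inferInstance
  instFin _ := inferInstance
  triv m hm := by
    have hneg : ¬ (i + 1 ≤ m ∧ m ≤ j ∧ m ≤ n) := by omega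
    have hbot : XV K n i j m = ⊥ := by unfold XV; rw [if_neg hneg]
    show Subsingleton (XV K n i j m)
    rw [hbot]
    infer_instance
  φ m := Xφ K n ε i j m

variable {K : Type} [Field K]

/-- `Hom(A, B) = 0`. -/
def homZero {n : ℕ} {ε : ℕ → Bool} (A B : Rep K n ε) : Prop :=
  ∀ θ : RepHom A B, ∀ m, θ.app m = 0

/-- `Hom(A, B) ≠ 0`. -/
def homNonzero {n : ℕ} {ε : ℕ → Bool} (A B : Rep K n ε) : Prop :=
  ∃ θ : RepHom A B, ∃ m, θ.app m ≠ 0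

/-- `0 → B → E → A → 0` is a short exact sequence. -/
def IsSES {n : ℕ} {ε : ℕ → Bool} {B E A : Rep K n ε}
    (f : RepHom B E) (g : RepHom E A) : Prop :=
  (∀ m, Function.Injective (f.app m)) ∧ (∀ m, Function.Surjective (g.app m)) ∧
    (∀ m, LinearMap.range (f.app m) = LinearMap.ker (g.app m))

/-- The short exact sequence `0 → B → E → A → 0` splits. -/
def Splits {n : ℕ} {ε : ℕ → Bool} {E A : Rep K n ε} (g : RepHom E A) : Prop :=
  ∃ s : RepHom A E, ∀ m, (g.app m).comp (s.app m) = LinearMap.id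

/-- `Ext¹(A, B) ≠ 0`: there is a nonsplit short exact sequence `0 → B → E → A → 0`. -/
def extNonzero {n : ℕ} {ε : ℕ → Bool} (A B : Rep K n ε) : Prop :=
  ∃ (E : Rep K n ε) (f : RepHom B E) (g : RepHom E A), IsSES f g ∧ ¬ Splits g

/-- `Ext¹(A, B) = 0`. -/
def extZero {n : ℕ} {ε : ℕ → Bool} (A B : Rep K n ε) : Prop := ¬ extNonzero A B

/-- `(U, V)` is an exceptional pair: `Hom(V,U) = 0` and `Ext¹(V,U) = 0`. -/
def ExcPair {n : ℕ} {ε : ℕ → Bool} (U V : Rep K n ε) : Prop := homZero V U ∧ extZero V U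


/-- The sequence `(X_{c 0}, …, X_{c (k-1)})` of indecomposables is an exceptional sequence. -/
def IsExcSeq (K : Type) [Field K] (n : ℕ) {k : ℕ} (ε : ℕ → Bool) (c : Fin k → ℕ × ℕ) : Prop :=
  ∀ a b : Fin k, a < b →
    ExcPair (Xrep K n ε (c a).1 (c a).2) (Xrep K n ε (c b).1 (c b).2)

/-- The set of indecomposables `{X_e : e ∈ d}` is an exceptional collection, i.e. it can be
ordered into an exceptional sequence. -/
def IsExcColl (K : Type) [Field K] (n : ℕ) (ε : ℕ → Bool) (d : Finset (ℕ × ℕ)) : Prop :=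
  ∃ c : Fin d.card → ℕ × ℕ, Function.Injective c ∧ (∀ a, c a ∈ d) ∧ IsExcSeq K n ε c

/-!
`Hom(A, B)` and `Ext¹(A, B)` are the kernel and cokernel of one linear map, the coboundary
`⨁ Hom(A_m, B_m) → ⨁ Hom(A_{src a}, B_{tgt a})`, so `(B, A)` is an exceptional pair iff this map is
bijective. For `A = X_{i,j}` and `B = X_{k,l}` each summand is `K` or `0`, and inverting the
coboundary means solving `t m - t (m + 1) = c m` with `t` supported on the common support
`(p, q]`. The arrows strictly inside contribute `q - p - 1` equations in `q - p` unknowns, and each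
of the boundary arrows `p` and `q` may or may not contribute one more, depending on `ε`; the system
is uniquely solvable iff exactly one of them does. Hence `(X_x, X_y)` is exceptional iff the
chords `x ≠ y` do not cross and `y` is not clockwise from `x`. In a noncrossing diagram an ordering
is therefore exceptional iff its reversal respects the clockwise relation, and it suffices to check
the generators of the order of `P_d` because the ordering enumerates all of `d`.
-/

section Coboundary

variable {n : ℕ} {ε : ℕ → Bool} {A B E : Rep K n ε}

/-- The map `⨁ Hom(A_m, B_m) → ⨁ Hom(A_{src a}, B_{tgt a})` obtained by applying `Hom(-, B)` to
the standard projective resolution of `A`: its kernel is `Hom(A, B)` and its cokernel is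
`Ext¹(A, B)`. The sums are encoded as products over `ℕ`, almost all of whose factors are zero. -/
def coboundary (A B : Rep K n ε) :
    (∀ m, A.V m →ₗ[K] B.V m) →ₗ[K] ∀ m, A.V (asrc ε m) →ₗ[K] B.V (atgt ε m) where
  toFun t m := B.φ m ∘ₗ t (asrc ε m) - t (atgt ε m) ∘ₗ A.φ m
  map_add' s t := by
    funext m
    simp only [Pi.add_apply, LinearMap.comp_add, LinearMap.add_comp]
    abel
  map_smul' a t := by
    funext m
    simp only [Pi.smul_apply, LinearMap.comp_smul, LinearMap.smul_comp, smul_sub, RingHom.id_apply]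

theorem coboundary_apply (t : ∀ m, A.V m →ₗ[K] B.V m) (m : ℕ) :
    coboundary A B t m = B.φ m ∘ₗ t (asrc ε m) - t (atgt ε m) ∘ₗ A.φ m :=
  rfl

theorem homZero_iff_injective_coboundary : homZero A B ↔ Function.Injective (coboundary A B) := by
  rw [injective_iff_map_eq_zero]
  constructor
  · intro hom_zero t ht
    exact funext (hom_zero ⟨t, fun m => (sub_eq_zero.1 (congrFun ht m)).symm⟩)
  · intro ker_zero θ
    exact congrFun (ker_zero θ.app (funext fun m => sub_eq_zero.2 (θ.comm m).symm))

/-- The extension `B ⊕ A` of `A` by `B` twisted by the cocycle `c`: the arrow maps are the block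
matrices with diagonal entries those of `B` and `A` and off-diagonal entry `c`. -/
def twistedSum (A B : Rep K n ε) (c : ∀ m, A.V (asrc ε m) →ₗ[K] B.V (atgt ε m)) : Rep K n ε where
  V m := B.V m × A.V m
  triv m hm :=
    have := A.triv m hm
    have := B.triv m hm
    inferInstance
  φ m := ((B.φ m).coprod (c m)).prod (A.φ m ∘ₗ LinearMap.snd K _ _)

namespace twistedSum

variable (c : ∀ m, A.V (asrc ε m) →ₗ[K] B.V (atgt ε m))

/-- The inclusion `B → B ⊕ A` into the twisted sum. -/
def inclusion : RepHom B (twistedSum A B c) where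
  app m := LinearMap.inl K (B.V m) (A.V m)
  comm m := LinearMap.ext fun x => Prod.ext
    (show B.φ m x = B.φ m x + c m 0 by rw [map_zero, add_zero]) (map_zero (A.φ m)).symm

/-- The projection `B ⊕ A → A` from the twisted sum. -/
def projection : RepHom (twistedSum A B c) A where
  app m := LinearMap.snd K (B.V m) (A.V m)
  comm _ := rfl

theorem isSES : IsSES (inclusion c) (projection c) :=
  ⟨fun _ => LinearMap.inl_injective, fun _ => LinearMap.snd_surjective,
    fun m => LinearMap.range_inl K (B.V m) (A.V m)⟩

theorem mem_range_coboundary_of_splits (h : Splits (projection c)) :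
    c ∈ LinearMap.range (coboundary A B) := by
  obtain ⟨s, hs⟩ := h
  refine neg_mem_iff.1 ⟨fun m => LinearMap.fst K (B.V m) (A.V m) ∘ₗ s.app m, funext fun m => ?_⟩
  ext x
  have snd_s : (s.app (asrc ε m) x).2 = x := LinearMap.congr_fun (hs (asrc ε m)) x
  have fst_comm : (s.app (atgt ε m) (A.φ m x)).1 =
      B.φ m (s.app (asrc ε m) x).1 + c m (s.app (asrc ε m) x).2 :=
    congrArg Prod.fst (LinearMap.congr_fun (s.comm m) x)
  calc B.φ m (s.app (asrc ε m) x).1 - (s.app (atgt ε m) (A.φ m x)).1 = -c m x := by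
        rw [fst_comm, snd_s, sub_add_cancel_left]

end twistedSum

theorem IsSES.exists_cocycle {f : RepHom B E} {g : RepHom E A} (h : IsSES f g)
    {s : ∀ m, A.V m →ₗ[K] E.V m} (hs : ∀ m, g.app m ∘ₗ s m = LinearMap.id) :
    ∃ c : ∀ m, A.V (asrc ε m) →ₗ[K] B.V (atgt ε m),
      ∀ m, f.app (atgt ε m) ∘ₗ c m = s (atgt ε m) ∘ₗ A.φ m - E.φ m ∘ₗ s (asrc ε m) := by
  obtain ⟨f_inj, -, range_eq_ker⟩ := h
  let defect (m : ℕ) := s (atgt ε m) ∘ₗ A.φ m - E.φ m ∘ₗ s (asrc ε m)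
  have defect_mem_range (m : ℕ) (x : A.V (asrc ε m)) :
      defect m x ∈ LinearMap.range (f.app (atgt ε m)) := by
    have g_s (m : ℕ) (x : A.V m) : g.app m (s m x) = x := LinearMap.congr_fun (hs m) x
    have g_E : g.app (atgt ε m) (E.φ m (s (asrc ε m) x)) = A.φ m (g.app (asrc ε m) (s _ x)) :=
      LinearMap.congr_fun (g.comm m) _
    rw [range_eq_ker, LinearMap.mem_ker, LinearMap.sub_apply, LinearMap.comp_apply,
      LinearMap.comp_apply, map_sub, g_E, g_s, g_s, sub_self]
  let toRange (m : ℕ) := LinearEquiv.ofInjective (f.app (atgt ε m)) (f_inj _)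
  refine ⟨fun m => (toRange m).symm.toLinearMap ∘ₗ
    (defect m).codRestrict _ (defect_mem_range m), fun m => LinearMap.ext fun x => ?_⟩
  exact congrArg Subtype.val ((toRange m).apply_symm_apply ⟨defect m x, defect_mem_range m x⟩)

theorem IsSES.splits_of_surjective_coboundary (hδ : Function.Surjective (coboundary A B))
    {f : RepHom B E} {g : RepHom E A} (h : IsSES f g) : Splits g := by
  have exists_section (m : ℕ) : ∃ s, g.app m ∘ₗ s = LinearMap.id :=
    (g.app m).exists_rightInverse_of_surjective (LinearMap.range_eq_top.2 (h.2.1 m))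
  choose s hs using exists_section
  obtain ⟨c, hc⟩ := h.exists_cocycle hs
  obtain ⟨t, rfl⟩ := hδ c
  refine ⟨⟨fun m => s m + f.app m ∘ₗ t m, fun m => ?_⟩, fun m => ?_⟩
  · have f_coboundary := hc m
    rw [coboundary_apply, LinearMap.comp_sub, ← LinearMap.comp_assoc, f.comm,
      sub_eq_sub_iff_add_eq_add, add_comm] at f_coboundary
    simpa only [LinearMap.add_comp, LinearMap.comp_add, LinearMap.comp_assoc, add_comm]
      using f_coboundary.symm
  · have g_f : g.app m ∘ₗ f.app m = 0 := LinearMap.range_le_ker_iff.1 (h.2.2 m).le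
    rw [LinearMap.comp_add, hs, ← LinearMap.comp_assoc, g_f, LinearMap.zero_comp, add_zero]

theorem extZero_iff_surjective_coboundary :
    extZero A B ↔ Function.Surjective (coboundary A B) := by
  constructor
  · intro ext_zero c
    refine twistedSum.mem_range_coboundary_of_splits c (not_not.1 fun not_splits => ?_)
    exact ext_zero ⟨_, _, _, twistedSum.isSES c, not_splits⟩
  · rintro hδ ⟨E, f, g, h, not_splits⟩
    exact not_splits (h.splits_of_surjective_coboundary hδ)

theorem excPair_iff_bijective_coboundary :
    ExcPair B A ↔ Function.Bijective (coboundary A B) :=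
  and_congr homZero_iff_injective_coboundary extZero_iff_surjective_coboundary

end Coboundary

section Difference

variable {G : Type*} [AddCommGroup G] {V S : Set ℕ} {c t : ℕ → G} {p q a b : ℕ}

/-- `t` is a primitive of `c`: a function supported on `V` whose difference `t m - t (m + 1)`
equals `c m` for every `m ∈ S`. For representations supported on intervals, `coboundary A B t = c`
takes this form, with `V` indexing the vertices and `S` the arrows that contribute. -/
def IsPrimitive (V S : Set ℕ) (c t : ℕ → G) : Prop :=
  (∀ m ∉ V, t m = 0) ∧ ∀ m ∈ S, t m - t (m + 1) = c m

theorem isPrimitive_congr {c' : ℕ → G} (h : Set.EqOn c c' S) :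
    IsPrimitive V S c t ↔ IsPrimitive V S c' t :=
  and_congr_right fun _ => forall₂_congr fun m hm => by rw [h hm]

theorem IsPrimitive.sub_eq_sum_Ico (h : IsPrimitive V S c t) (hab : a ≤ b)
    (hS : Set.Ico a b ⊆ S) : t a - t b = ∑ m ∈ Finset.Ico a b, c m := by
  rw [← Finset.sum_congr rfl fun m hm => h.2 m (hS (Finset.mem_Ico.1 hm)),
    ← neg_sub, ← Finset.sum_Ico_sub t hab, ← Finset.sum_neg_distrib]
  simp only [neg_sub]

theorem isPrimitive_empty_iff : IsPrimitive ∅ S c t ↔ t = 0 ∧ ∀ m ∈ S, c m = 0 := by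
  simp only [IsPrimitive, Set.mem_empty_iff_false, not_false_eq_true, true_imp_iff, funext_iff,
    Pi.zero_apply]
  exact and_congr_right fun ht => by simp [ht, eq_comm]

theorem forall_existsUnique_isPrimitive_empty_iff [Nontrivial G] :
    (∀ c : ℕ → G, ∃! t, IsPrimitive ∅ S c t) ↔ S = ∅ := by
  simp only [isPrimitive_empty_iff]
  constructor
  · intro h
    obtain ⟨g, hg⟩ := exists_ne (0 : G)
    obtain ⟨-, ⟨-, hS⟩, -⟩ := h fun _ => g
    exact Set.eq_empty_of_forall_notMem fun m hm => hg (hS m hm)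
  · rintro rfl c
    exact ⟨0, by simp, fun _ h => h.1⟩

theorem existsUnique_isPrimitive_Ico (c : ℕ → G) :
    ∃! t, IsPrimitive (Set.Ioc p q) (Set.Ico p q) c t := by
  classical
  refine ⟨fun m => if m ∈ Set.Ioc p q then -∑ r ∈ Finset.Ico p m, c r else 0,
    ⟨fun m hm => if_neg hm, fun m hm => ?_⟩, fun t ht => funext fun m => ?_⟩
  · have sum_succ := Finset.sum_Ico_succ_top hm.1 c
    obtain rfl | hpm := hm.1.eq_or_lt <;> grind [Finset.Ico_self]
  · split_ifs with hm
    · rw [← ht.sub_eq_sum_Ico hm.1.le (Set.Ico_subset_Ico_right hm.2), ht.1 p (by grind)]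
      abel
    · exact ht.1 m hm

theorem existsUnique_isPrimitive_Ioc (c : ℕ → G) :
    ∃! t, IsPrimitive (Set.Ioc p q) (Set.Ioc p q) c t := by
  classical
  refine ⟨fun m => if m ∈ Set.Ioc p q then ∑ r ∈ Finset.Ico m (q + 1), c r else 0,
    ⟨fun m hm => if_neg hm, fun m hm => ?_⟩, fun t ht => funext fun m => ?_⟩
  · have sum_bot := Finset.sum_eq_sum_Ico_succ_bot (Nat.lt_succ_of_le hm.2) c
    obtain rfl | hmq := hm.2.eq_or_lt <;> grind [Finset.Ico_self]
  · split_ifs with hm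
    · rw [← ht.sub_eq_sum_Ico (by grind) (by grind), ht.1 (q + 1) (by grind), sub_zero]
    · exact ht.1 m hm

theorem not_existsUnique_isPrimitive_Ioo [Nontrivial G] (hpq : p < q) :
    ¬ ∃! t : ℕ → G, IsPrimitive (Set.Ioc p q) (Set.Ioo p q) 0 t := by
  intro h
  obtain ⟨g, hg⟩ := exists_ne (0 : G)
  have const_primitive : IsPrimitive (Set.Ioc p q) (Set.Ioo p q) 0
      ((Set.Ioc p q).indicator fun _ => g) :=
    ⟨fun m hm => Set.indicator_of_notMem hm _, fun m hm => by
      rw [Set.indicator_of_mem (by grind), Set.indicator_of_mem (by grind), sub_self,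
        Pi.zero_apply]⟩
  have zero_primitive : IsPrimitive (Set.Ioc p q) (Set.Ioo p q) 0 (0 : ℕ → G) := by
    simp [IsPrimitive]
  apply hg
  simpa [hpq] using congrFun (h.unique const_primitive zero_primitive) q

theorem exists_forall_not_isPrimitive_Icc [Nontrivial G] (hpq : p ≤ q) :
    ∃ c : ℕ → G, ∀ t, ¬ IsPrimitive (Set.Ioc p q) (Set.Icc p q) c t := by
  obtain ⟨g, hg⟩ := exists_ne (0 : G)
  refine ⟨Pi.single p g, fun t ht => hg ?_⟩
  have telescope := ht.sub_eq_sum_Ico (a := p) (b := q + 1) (by grind) (by grind)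
  rw [ht.1 p (by grind), ht.1 (q + 1) (by grind)] at telescope
  simpa [Finset.sum_pi_single, hpq] using telescope.symm

theorem forall_existsUnique_isPrimitive_iff_xor [Nontrivial G] (hpq : p < q)
    (hIoo : Set.Ioo p q ⊆ S) (hIcc : S ⊆ Set.Icc p q) :
    (∀ c : ℕ → G, ∃! t, IsPrimitive (Set.Ioc p q) S c t) ↔ Xor (p ∈ S) (q ∈ S) := by
  by_cases hp : p ∈ S <;> by_cases hq : q ∈ S <;> simp only [hp, hq, xor_def]
  · obtain rfl : S = Set.Icc p q := by grind
    obtain ⟨c, hc⟩ := exists_forall_not_isPrimitive_Icc (G := G) hpq.le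
    simpa using ⟨c, fun h => hc _ h.exists.choose_spec⟩
  · obtain rfl : S = Set.Ico p q := by grind
    simpa using existsUnique_isPrimitive_Ico
  · obtain rfl : S = Set.Ioc p q := by grind
    simpa using existsUnique_isPrimitive_Ioc
  · obtain rfl : S = Set.Ioo p q := by grind
    simpa using ⟨0, not_existsUnique_isPrimitive_Ioo hpq⟩

end Difference

section Interval

variable {n i j k l m a b : ℕ} {ε : ℕ → Bool}

/-- The coordinate of an element of `(X_{i,j})_m`, which is by definition a subspace of `K`. -/
def coord : (Xrep K n ε i j).V m →ₗ[K] K :=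
  (XV K n i j m).subtype

theorem coord_injective : Function.Injective (coord : (Xrep K n ε i j).V m →ₗ[K] K) :=
  Subtype.val_injective

theorem coord_eq_zero (hm : m ∉ Set.Ioc i j) (x : (Xrep K n ε i j).V m) : coord x = 0 := by
  have XV_eq_bot : XV K n i j m = ⊥ := if_neg fun h => hm ⟨h.1, h.2.1⟩
  have coord_mem : coord x ∈ XV K n i j m := Subtype.property (p := (· ∈ XV K n i j m)) x
  rwa [XV_eq_bot] at coord_mem

theorem coord_φ (hj : j ≤ n) (ht : atgt ε m ∈ Set.Ioc i j)
    (x : (Xrep K n ε i j).V (asrc ε m)) : coord ((Xrep K n ε i j).φ m x) = coord x := by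
  change coord (ε := ε) (Xφ K n ε i j m x) = _
  rw [Xφ, dif_pos ⟨ht.1, ht.2, ht.2.trans hj⟩]
  rfl

/-- The standard generator of `(X_{i,j})_m`: it has coordinate `1` if `m` is in the support of
`X_{i,j}`, and is zero otherwise. -/
def gen (K : Type) [Field K] (n : ℕ) (ε : ℕ → Bool) (i j m : ℕ) : (Xrep K n ε i j).V m :=
  (⟨if i + 1 ≤ m ∧ m ≤ j ∧ m ≤ n then 1 else 0, by unfold XV; split_ifs <;> simp⟩ : XV K n i j m)

theorem coord_gen (hj : j ≤ n) (hm : m ∈ Set.Ioc i j) : coord (gen K n ε i j m) = 1 :=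
  if_pos ⟨hm.1, hm.2, hm.2.trans hj⟩

theorem gen_eq_zero (hm : m ∉ Set.Ioc i j) : gen K n ε i j m = 0 :=
  coord_injective (by rw [coord_eq_zero hm, map_zero])

theorem coord_smul_gen (hj : j ≤ n) (x : (Xrep K n ε i j).V m) :
    coord x • gen K n ε i j m = x := by
  apply coord_injective
  by_cases hm : m ∈ Set.Ioc i j
  · rw [map_smul, coord_gen hj hm, smul_eq_mul, mul_one]
  · rw [coord_eq_zero hm, coord_eq_zero hm]

theorem φ_gen (hj : j ≤ n) (hs : asrc ε m ∈ Set.Ioc i j) :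
    (Xrep K n ε i j).φ m (gen K n ε i j (asrc ε m)) = gen K n ε i j (atgt ε m) := by
  apply coord_injective
  by_cases ht : atgt ε m ∈ Set.Ioc i j
  · rw [coord_φ hj ht, coord_gen hj hs, coord_gen hj ht]
  · rw [coord_eq_zero ht, coord_eq_zero ht]

/-- The single matrix entry of a linear map `(X_{i,j})_a → (X_{k,l})_b` with respect to the
standard generators. -/
def entry (θ : (Xrep K n ε i j).V a →ₗ[K] (Xrep K n ε k l).V b) : K :=
  coord (θ (gen K n ε i j a))

theorem entry_injective (hj : j ≤ n) :
    Function.Injective (entry : ((Xrep K n ε i j).V a →ₗ[K] (Xrep K n ε k l).V b) → K) := by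
  intro θ η h
  ext x
  rw [← coord_smul_gen hj x, map_smul, map_smul, coord_injective h]

theorem entry_eq_zero (h : ¬(a ∈ Set.Ioc i j ∧ b ∈ Set.Ioc k l))
    (θ : (Xrep K n ε i j).V a →ₗ[K] (Xrep K n ε k l).V b) : entry θ = 0 := by
  by_cases ha : a ∈ Set.Ioc i j
  · exact coord_eq_zero (fun hb => h ⟨ha, hb⟩) _
  · rw [entry, gen_eq_zero ha, map_zero, map_zero]

theorem exists_entry_eq (hj : j ≤ n) (hl : l ≤ n) {s : K}
    (h : ¬(a ∈ Set.Ioc i j ∧ b ∈ Set.Ioc k l) → s = 0) :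
    ∃ θ : (Xrep K n ε i j).V a →ₗ[K] (Xrep K n ε k l).V b, entry θ = s := by
  by_cases hab : a ∈ Set.Ioc i j ∧ b ∈ Set.Ioc k l
  · refine ⟨coord.smulRight (s • gen K n ε k l b), ?_⟩
    rw [entry, LinearMap.smulRight_apply, coord_gen hj hab.1, one_smul, map_smul,
      coord_gen hl hab.2, smul_eq_mul, mul_one]
  · exact ⟨0, by rw [entry_eq_zero hab, h hab]⟩

/-- The arrows contributing to `⨁ Hom((X_{i,j})_{src a}, (X_{k,l})_{tgt a})`. -/
def arrowSupport (ε : ℕ → Bool) (i j k l : ℕ) : Set ℕ :=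
  {m | asrc ε m ∈ Set.Ioc i j ∧ atgt ε m ∈ Set.Ioc k l}

/-- The sign relating `t (asrc ε m) - t (atgt ε m)` to `t m - t (m + 1)`. -/
def arrowSign (K : Type) [Field K] (ε : ℕ → Bool) (m : ℕ) : K :=
  if ε m then 1 else -1

theorem arrowSign_mul_self (ε : ℕ → Bool) (m : ℕ) : arrowSign K ε m * arrowSign K ε m = 1 := by
  unfold arrowSign
  split_ifs <;> simp

theorem sub_asrc_atgt (t : ℕ → K) (ε : ℕ → Bool) (m : ℕ) :
    t (asrc ε m) - t (atgt ε m) = arrowSign K ε m * (t m - t (m + 1)) := by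
  unfold asrc atgt arrowSign
  split_ifs <;> ring

theorem entry_coboundary (hj : j ≤ n) (hl : l ≤ n) (hm : m ∈ arrowSupport ε i j k l)
    (θ : ∀ m, (Xrep K n ε i j).V m →ₗ[K] (Xrep K n ε k l).V m) :
    entry (coboundary _ _ θ m) = arrowSign K ε m * (entry (θ m) - entry (θ (m + 1))) := by
  rw [← sub_asrc_atgt fun m => entry (θ m), entry, coboundary_apply, LinearMap.sub_apply,
    LinearMap.comp_apply, LinearMap.comp_apply, map_sub, coord_φ hl hm.2, φ_gen hj hm.1,
    entry, entry]

theorem coboundary_eq_iff_isPrimitive (hj : j ≤ n) (hl : l ≤ n)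
    (θ : ∀ m, (Xrep K n ε i j).V m →ₗ[K] (Xrep K n ε k l).V m)
    (γ : ∀ m, (Xrep K n ε i j).V (asrc ε m) →ₗ[K] (Xrep K n ε k l).V (atgt ε m)) :
    coboundary _ _ θ = γ ↔ IsPrimitive (Set.Ioc i j ∩ Set.Ioc k l) (arrowSupport ε i j k l)
      (fun m => arrowSign K ε m * entry (γ m)) (fun m => entry (θ m)) := by
  constructor
  · rintro rfl
    refine ⟨fun m hm => entry_eq_zero hm _, fun m hm => ?_⟩
    simp only [entry_coboundary hj hl hm, ← mul_assoc, arrowSign_mul_self, one_mul]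
  · rintro ⟨-, h⟩
    refine funext fun m => entry_injective hj ?_
    by_cases hm : m ∈ arrowSupport ε i j k l
    · rw [entry_coboundary hj hl hm, h m hm, ← mul_assoc, arrowSign_mul_self, one_mul]
    · rw [entry_eq_zero hm, entry_eq_zero hm]

theorem existsUnique_coboundary_eq_iff (hj : j ≤ n) (hl : l ≤ n)
    (γ : ∀ m, (Xrep K n ε i j).V (asrc ε m) →ₗ[K] (Xrep K n ε k l).V (atgt ε m)) :
    (∃! θ, coboundary _ _ θ = γ) ↔ ∃! t, IsPrimitive (Set.Ioc i j ∩ Set.Ioc k l)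
      (arrowSupport ε i j k l) (fun m => arrowSign K ε m * entry (γ m)) t := by
  have exists_entries_eq (t : ℕ → K) (ht : ∀ m ∉ Set.Ioc i j ∩ Set.Ioc k l, t m = 0) :
      ∃ θ : ∀ m, (Xrep K n ε i j).V m →ₗ[K] (Xrep K n ε k l).V m, (fun m => entry (θ m)) = t := by
    choose θ hθ using fun m => exists_entry_eq (ε := ε) hj hl (ht m)
    exact ⟨θ, funext hθ⟩
  simp only [coboundary_eq_iff_isPrimitive hj hl]
  constructor
  · rintro ⟨θ, hθ, θ_unique⟩
    refine ⟨_, hθ, fun t ht => ?_⟩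
    obtain ⟨η, rfl⟩ := exists_entries_eq t ht.1
    rw [θ_unique η ht]
  · rintro ⟨t, ht, t_unique⟩
    obtain ⟨θ, rfl⟩ := exists_entries_eq t ht.1
    exact ⟨θ, ht, fun η hη => funext fun m => entry_injective hj (congrFun (t_unique _ hη) m)⟩

theorem excPair_Xrep_iff_existsUnique_isPrimitive (hj : j ≤ n) (hl : l ≤ n) :
    ExcPair (Xrep K n ε k l) (Xrep K n ε i j) ↔ ∀ c : ℕ → K, ∃! t,
      IsPrimitive (Set.Ioc i j ∩ Set.Ioc k l) (arrowSupport ε i j k l) c t := by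
  rw [excPair_iff_bijective_coboundary, Function.bijective_iff_existsUnique]
  simp only [existsUnique_coboundary_eq_iff hj hl]
  refine ⟨fun h c => ?_, fun h γ => h _⟩
  classical
  choose γ hγ using fun m => exists_entry_eq (K := K) (ε := ε) (a := asrc ε m) (b := atgt ε m) hj hl
    (s := if m ∈ arrowSupport ε i j k l then arrowSign K ε m * c m else 0) fun hm => if_neg hm
  have sign_mul_entry : Set.EqOn (fun m => arrowSign K ε m * entry (γ m)) c
      (arrowSupport ε i j k l) := fun m hm => by
    simp only [hγ, if_pos hm, ← mul_assoc, arrowSign_mul_self, one_mul]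
  simpa only [isPrimitive_congr sign_mul_entry] using h γ

end Interval

section Chords

variable {n i j k l : ℕ} {ε : ℕ → Bool} {x y : ℕ × ℕ}

theorem Ioo_subset_arrowSupport :
    Set.Ioo (max i k) (min j l) ⊆ arrowSupport ε i j k l := by
  intro m hm
  simp only [arrowSupport, asrc, atgt, Set.mem_Ioo, Set.mem_Ioc, Set.mem_ofPred_eq] at hm ⊢
  split_ifs <;> omega

theorem arrowSupport_subset_Icc :
    arrowSupport ε i j k l ⊆ Set.Icc (max i k) (min j l) := by
  intro m hm
  simp only [arrowSupport, asrc, atgt, Set.mem_Icc, Set.mem_Ioc, Set.mem_ofPred_eq] at hm ⊢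
  split_ifs at hm <;> omega

theorem max_mem_arrowSupport_iff (h : max i k < min j l) :
    max i k ∈ arrowSupport ε i j k l ↔ i < k ∧ ε k = true ∨ k < i ∧ ε i = false := by
  simp only [arrowSupport, asrc, atgt, Set.mem_Ioc, Set.mem_ofPred_eq]
  grind

theorem min_mem_arrowSupport_iff (h : max i k < min j l) :
    min j l ∈ arrowSupport ε i j k l ↔ l < j ∧ ε l = false ∨ j < l ∧ ε j = true := by
  simp only [arrowSupport, asrc, atgt, Set.mem_Ioc, Set.mem_ofPred_eq]
  grind

theorem arrowSupport_eq_empty_iff (hij : i < j) (hkl : k < l) (h : min j l ≤ max i k) :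
    arrowSupport ε i j k l = ∅ ↔ ¬(j = k ∧ ε j = true) ∧ ¬(l = i ∧ ε i = false) := by
  simp only [arrowSupport, asrc, atgt, Set.mem_Ioc, Set.eq_empty_iff_forall_notMem,
    Set.mem_ofPred_eq]
  grind

theorem excPair_Xrep_iff_of_overlap (hj : j ≤ n) (hl : l ≤ n) (h : max i k < min j l) :
    ExcPair (Xrep K n ε k l) (Xrep K n ε i j) ↔
      Xor (i < k ∧ ε k = true ∨ k < i ∧ ε i = false)
        (l < j ∧ ε l = false ∨ j < l ∧ ε j = true) := by
  rw [excPair_Xrep_iff_existsUnique_isPrimitive hj hl, Set.Ioc_inter_Ioc,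
    forall_existsUnique_isPrimitive_iff_xor h Ioo_subset_arrowSupport arrowSupport_subset_Icc,
    max_mem_arrowSupport_iff h, min_mem_arrowSupport_iff h]

theorem excPair_Xrep_iff_of_disjoint (hj : j ≤ n) (hl : l ≤ n) (hij : i < j) (hkl : k < l)
    (h : min j l ≤ max i k) :
    ExcPair (Xrep K n ε k l) (Xrep K n ε i j) ↔
      ¬(j = k ∧ ε j = true) ∧ ¬(l = i ∧ ε i = false) := by
  rw [excPair_Xrep_iff_existsUnique_isPrimitive hj hl, Set.Ioc_inter_Ioc, Set.Ioc_eq_empty h.not_gt,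
    forall_existsUnique_isPrimitive_empty_iff, arrowSupport_eq_empty_iff hij hkl h]

theorem excPair_Xrep_iff (hx : x.1 < x.2 ∧ x.2 ≤ n) (hy : y.1 < y.2 ∧ y.2 ≤ n) :
    ExcPair (Xrep K n ε x.1 x.2) (Xrep K n ε y.1 y.2) ↔
      x ≠ y ∧ ¬Crosses ε x y ∧ ¬Cw ε y x := by
  obtain ⟨k, l⟩ := x
  obtain ⟨i, j⟩ := y
  obtain h | h := lt_or_ge (max i k) (min j l)
  · rw [excPair_Xrep_iff_of_overlap hy.2 hx.2 h, Crosses, Cw]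
    obtain hik | rfl | hik := lt_trichotomy i k <;> obtain hjl | rfl | hjl := lt_trichotomy j l <;>
      grind
  · rw [excPair_Xrep_iff_of_disjoint hy.2 hx.2 hy.1 hx.1 h, Crosses, Cw]
    grind

theorem Cw.sharesEndpoint (h : Cw ε x y) : SharesEndpoint y x := by
  unfold Cw at h
  unfold SharesEndpoint
  grind

end Chords

section LinearExtensions

theorem forall_reflTransGen_le_iff {ι α : Type*} [PartialOrder ι] {r : α → α → Prop} {g : ι → α}
    (hg : Function.Injective g) (hr : ∀ x y, r x y → x ∈ Set.range g) :
    (∀ a b, Relation.ReflTransGen r (g a) (g b) → a ≤ b) ↔ ∀ a b, r (g a) (g b) → a ≤ b := by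
  refine ⟨fun h a b hab => h a b (.single hab), fun h a b hab => ?_⟩
  generalize hy : g b = y at hab
  induction hab generalizing b with
  | refl => exact (hg hy).ge
  | tail _ hxy ih =>
    obtain ⟨b', rfl⟩ := hr _ _ hxy
    exact (ih b' rfl).trans (h b' b (hy ▸ hxy))

theorem mem_range_of_injective_of_card_eq {ι α : Type*} [Fintype ι] {d : Finset α} {g : ι → α}
    (hcard : d.card = Fintype.card ι) (hg : Function.Injective g) (hd : ∀ a, g a ∈ d) {x : α}
    (hx : x ∈ d) : x ∈ Set.range g := by
  obtain ⟨a, -, ha⟩ := Finset.surjOn_of_injOn_of_card_le g (s := .univ) (fun a _ => hd a)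
    hg.injOn hcard.le hx
  exact ⟨a, ha⟩

variable {n k : ℕ} {ε : ℕ → Bool} {d : Finset (ℕ × ℕ)} {c g : Fin k → ℕ × ℕ}

theorem isExcSeq_iff_forall_not_cw (hc : ∀ a, (c a).1 < (c a).2 ∧ (c a).2 ≤ n)
    (hc_inj : Function.Injective c) (hcross : ∀ a b, ¬Crosses ε (c a) (c b)) :
    IsExcSeq K n ε c ↔ ∀ a b, a < b → ¬Cw ε (c b) (c a) :=
  forall₃_congr fun a b hab => by simp [excPair_Xrep_iff (hc a) (hc b), hcross, hc_inj.ne hab.ne]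

theorem forall_leD_le_iff (hcard : d.card = k) (hg : Function.Injective g) (hd : ∀ a, g a ∈ d) :
    (∀ a b, leD ε d (g a) (g b) → a ≤ b) ↔ ∀ a b, Cw ε (g b) (g a) → a ≤ b := by
  have mem_range_g {x : ℕ × ℕ} : x ∈ d → x ∈ Set.range g :=
    mem_range_of_injective_of_card_eq (hcard.trans (Fintype.card_fin k).symm) hg hd
  refine (forall_reflTransGen_le_iff hg fun x y h => mem_range_g h.1).trans ?_
  exact forall₂_congr fun a b =>
    imp_congr_left ⟨fun h => h.2.2.2, fun h => ⟨hd a, hd b, h.sharesEndpoint, h⟩⟩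

theorem isExcSeq_iff_forall_leD_rev_le (hcard : d.card = k)
    (hvalid : ∀ x ∈ d, x.1 < x.2 ∧ x.2 ≤ n) (hcross : ∀ x ∈ d, ∀ y ∈ d, ¬Crosses ε x y)
    (hc_inj : Function.Injective c) (hcd : ∀ a, c a ∈ d) :
    IsExcSeq K n ε c ↔ ∀ a b, leD ε d ((c ∘ Fin.rev) a) ((c ∘ Fin.rev) b) → a ≤ b := by
  rw [isExcSeq_iff_forall_not_cw (fun a => hvalid _ (hcd a)) hc_inj
      fun a b => hcross _ (hcd a) _ (hcd b),
    forall_leD_le_iff hcard (hc_inj.comp Fin.rev_injective) fun a => hcd _,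
    Fin.rev_surjective.forall₂]
  exact forall₂_congr fun a b => by rw [Fin.rev_lt_rev, imp_not_comm, not_lt]; rfl

theorem ces_biject_with_linear_extensions_general (K : Type) [Field K] (n k : ℕ) (ε : ℕ → Bool)
    (d : Finset (ℕ × ℕ)) (hcard : d.card = k) (hvalid : ∀ x ∈ d, x.1 < x.2 ∧ x.2 ≤ n)
    (hcross : ∀ x ∈ d, ∀ y ∈ d, ¬Crosses ε x y) :
    Set.BijOn (fun (c : Fin k → ℕ × ℕ) => c ∘ Fin.rev)
      {c : Fin k → ℕ × ℕ | (∀ a, c a ∈ d) ∧ Function.Injective c ∧ IsExcSeq K n ε c}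
      {g : Fin k → ℕ × ℕ | (∀ a, g a ∈ d) ∧ Function.Injective g ∧
        ∀ a b : Fin k, leD ε d (g a) (g b) → a ≤ b} := by
  refine (Fin.revPerm.arrowCongr (Equiv.refl (ℕ × ℕ))).bijOn fun c => ?_
  have mem_rev_iff : (∀ a, (c ∘ Fin.rev) a ∈ d) ↔ ∀ a, c a ∈ d :=
    (Fin.rev_surjective.forall (p := (c · ∈ d))).symm
  have injective_rev_iff : Function.Injective (c ∘ Fin.rev) ↔ Function.Injective c :=
    Function.Injective.of_comp_iff' c Fin.rev_bijective
  calc (∀ a, (c ∘ Fin.rev) a ∈ d) ∧ Function.Injective (c ∘ Fin.rev) ∧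
        (∀ a b, leD ε d ((c ∘ Fin.rev) a) ((c ∘ Fin.rev) b) → a ≤ b)
    _ ↔ (∀ a, c a ∈ d) ∧ Function.Injective c ∧
        (∀ a b, leD ε d ((c ∘ Fin.rev) a) ((c ∘ Fin.rev) b) → a ≤ b) := by
      rw [mem_rev_iff, injective_rev_iff]
    _ ↔ (∀ a, c a ∈ d) ∧ Function.Injective c ∧ IsExcSeq K n ε c :=
      and_congr_right fun hcd => and_congr_right fun hc_inj =>
        (isExcSeq_iff_forall_leD_rev_le hcard hvalid hcross hc_inj hcd).symm

end LinearExtensions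

/-- Theorem 5.9: for a strand diagram `d` with `n` strands and its complete exceptional
collection `ξ̄`, reversal `c ↦ c ∘ Fin.rev` is a bijection from the complete exceptional
sequences formed from the representations of `ξ̄` onto the linear extensions of `P_d`
(a linear extension `f : P_d → {1,…,n}` being recorded by its inverse enumeration
`g : Fin n → d`, `g ℓ = f⁻¹(ℓ+1)`; the sequence `(V_1,…,V_n)` maps to `f(chord of V_ℓ) = n+1−ℓ`). -/
theorem ces_biject_with_linear_extensions (K : Type) [Field K] (n : ℕ) (hn : 1 ≤ n)
    (ε : ℕ → Bool) (d : Finset (ℕ × ℕ)) (hcard : d.card = n) (hd : IsDiagram n ε d) :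
    Set.BijOn (fun (c : Fin n → ℕ × ℕ) => c ∘ Fin.rev)
      {c : Fin n → ℕ × ℕ | (∀ a, c a ∈ d) ∧ Function.Injective c ∧ IsExcSeq K n ε c}
      {g : Fin n → ℕ × ℕ | (∀ a, g a ∈ d) ∧ Function.Injective g ∧
        ∀ a b : Fin n, leD ε d (g a) (g b) → a ≤ b} :=
  ces_biject_with_linear_extensions_general K n n ε d hcard hd.1 hd.2.1

end ESPaper
end
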